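/- arXiv:1506.07420 — 3 statements merged into one kernel-verified Lean document; each statement's English description precedes it below -/
import Mathlib

section
/- Let V(x) = (1/256)·sech²(x/(8√2)) + 24·tanh(x/(8√2))·cosh²(x/(8√2))·tanh(x/√2)·sech²(x/√2) and Z₁(x) = 2^(-3/4)·√3·tanh(x/√2)·sech(x/√2)·cosh(x/(8√2)). There exists κ > 0 such that for every odd differentiable function w : ℝ → ℝ with w and w' square integrable on ℝ and satisfying ∫_ℝ w(x)·Z₁(x) dx = 0, one has ∫_ℝ ( w'(x)² - V(x)·w(x)² ) dx ≥ κ·∫_ℝ w'(x)² dx. -/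
open MeasureTheory

noncomputable def sech (x : ℝ) : ℝ := 1 / Real.cosh x

noncomputable def Vpot (x : ℝ) : ℝ :=
  (1 / 256) * sech (x / (8 * Real.sqrt 2)) ^ 2
    + 24 * Real.tanh (x / (8 * Real.sqrt 2)) * Real.cosh (x / (8 * Real.sqrt 2)) ^ 2
      * Real.tanh (x / Real.sqrt 2) * sech (x / Real.sqrt 2) ^ 2

noncomputable def Z1 (x : ℝ) : ℝ :=
  (2 : ℝ) ^ (-(3 : ℝ) / 4) * Real.sqrt 3 * Real.tanh (x / Real.sqrt 2) * sech (x / Real.sqrt 2)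
    * Real.cosh (x / (8 * Real.sqrt 2))

/-!
On the half-line, write `w = h u` with `h > 0` and `h'' + V h ≤ Z`. Integrating by parts,
`∫ (w'² - V w²) ≥ ∫ (h² u'² - Z h u²)`, and the right-hand side is nonnegative for
`∫ Z h u = ∫ Z w = 0` as soon as the weighted Poincaré inequality `∫ Z h u² ≤ ∫ h² u'²` holds. With
`M x = ∫₀ˣ Z w`, which vanishes at both ends, that inequality follows by completing squares from any
solution `P` of `P' + Z h P² + h⁻² ≤ 0`.

In the variable `s = x / (8√2)` the functions `V`, `Z₁` and suitable `h`, `P` are, up to powers of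
`tanh s` and `cosh s`, rational in `r = sinh² s`, so that both pointwise conditions reduce to
polynomial inequalities on `r ≥ 0`. There is room to replace `V` by `(51 / 50) V`, and
`0 ≤ ∫ (w'² - (51 / 50) V w²)` is the coercivity estimate with constant `1 / 51`.
-/

namespace KinkVirial

open Real Set Filter Topology Asymptotics
open Polynomial (derivative_pow X)
open scoped Polynomial

theorem tendsto_zero_of_integrableOn_sq {w : ℝ → ℝ} {a : ℝ} (hw : Differentiable ℝ w)
    (hw2 : IntegrableOn (fun x => w x ^ 2) (Ioi a))
    (hdw2 : IntegrableOn (fun x => deriv w x ^ 2) (Ioi a)) : Tendsto w atTop (𝓝 0) := by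
  have hmul : IntegrableOn (fun x => w x * deriv w x) (Ioi a) :=
    ((memLp_two_iff_integrable_sq hw.continuous.aestronglyMeasurable).2 hw2).integrable_mul
      ((memLp_two_iff_integrable_sq (measurable_deriv w).aestronglyMeasurable).2 hdw2)
  have hderiv : ∀ x, HasDerivAt (fun x => w x ^ 2) (2 * (w x * deriv w x)) x := fun x => by
    simpa [mul_assoc] using (hw x).hasDerivAt.fun_pow 2
  have hsq : Tendsto (fun x => w x ^ 2) atTop (𝓝 0) :=
    tendsto_zero_of_hasDerivAt_of_integrableOn_Ioi (fun x _ => hderiv x) (hmul.const_mul 2) hw2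
  refine (tendsto_zero_iff_abs_tendsto_zero w).2 ?_
  simpa only [Function.comp_def, Real.sqrt_sq_eq_abs, Real.sqrt_zero] using hsq.sqrt

theorem isBigO_intervalIntegral_pow_succ {f : ℝ → ℝ} {n : ℕ}
    (hf : f =O[𝓝[>] 0] fun x => x ^ n) :
    (fun x => ∫ t in (0 : ℝ)..x, f t) =O[𝓝[>] 0] fun x => x ^ (n + 1) := by
  obtain ⟨C, hC⟩ := hf.bound
  obtain ⟨δ, hδ, hfδ⟩ := mem_nhdsGT_iff_exists_Ioo_subset.1 hC
  refine .of_bound C ?_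
  filter_upwards [Ioo_mem_nhdsGT hδ] with x hx
  have hbound : ∀ t ∈ uIoc 0 x, ‖f t‖ ≤ C * x ^ n := fun t ht => by
    rw [uIoc_of_le hx.1.le] at ht
    have hft : ‖f t‖ ≤ C * ‖t ^ n‖ := hfδ ⟨ht.1, ht.2.trans_lt hx.2⟩
    have hC0 : 0 ≤ C := nonneg_of_mul_nonneg_left ((norm_nonneg _).trans hft)
      (norm_pos_iff.2 (pow_pos ht.1 n).ne')
    rw [Real.norm_of_nonneg (pow_pos ht.1 n).le] at hft
    exact hft.trans (by gcongr; exacts [ht.1.le, ht.2])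
  calc ‖∫ t in (0 : ℝ)..x, f t‖ ≤ C * x ^ n * |x - 0| :=
        intervalIntegral.norm_integral_le_of_norm_le_const hbound
    _ = C * ‖x ^ (n + 1)‖ := by
        rw [sub_zero, norm_pow, Real.norm_eq_abs, abs_of_pos hx.1]; ring

theorem isBigO_integral_Ioi_exp_neg {f : ℝ → ℝ} {b : ℝ} (hb : 0 < b)
    (hf : f =O[atTop] fun x => Real.exp (-b * x)) :
    (fun x => ∫ t in Ioi x, f t) =O[atTop] fun x => Real.exp (-b * x) := by
  obtain ⟨C, hC⟩ := hf.bound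
  obtain ⟨R, hR⟩ := eventually_atTop.1 hC
  refine .of_bound (C / b) ?_
  filter_upwards [eventually_ge_atTop R] with x hx
  have hbound : ∀ t ∈ Ioi x, ‖f t‖ ≤ C * Real.exp (-b * t) := fun t ht => by
    simpa only [Real.norm_eq_abs, Real.abs_exp] using hR t (hx.trans (le_of_lt ht))
  calc ‖∫ t in Ioi x, f t‖ ≤ ∫ t in Ioi x, C * Real.exp (-b * t) :=
        norm_integral_le_of_norm_le ((integrableOn_exp_mul_Ioi (neg_lt_zero.2 hb) x).const_mul C)
          (ae_restrict_of_forall_mem measurableSet_Ioi hbound)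
    _ = C / b * ‖Real.exp (-b * x)‖ := by
        rw [integral_const_mul, integral_exp_mul_Ioi (neg_lt_zero.2 hb), Real.norm_eq_abs,
          Real.abs_exp]
        field_simp

theorem integral_eq_two_mul_integral_Ioi_of_even {f : ℝ → ℝ} (hf : f.Even) :
    ∫ x, f x = 2 * ∫ x in Ioi (0 : ℝ), f x := by
  have habs : ∀ x, f |x| = f x := fun x => by
    rcases abs_choice x with h | h <;> rw [h]
    exact hf x
  simpa only [habs] using integral_comp_abs (f := f)

theorem deriv_even_of_odd {w : ℝ → ℝ} (hw : w.Odd) : (deriv w).Even := fun x => by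
  have h := deriv_comp_neg w x
  rw [show (fun x => w (-x)) = fun x => -w x from funext hw, deriv.fun_neg] at h
  exact (neg_injective h).symm

theorem sub_le_integral_Ioi_of_hasDerivAt_le {G G' φ : ℝ → ℝ} {a m l : ℝ}
    (hderiv : ∀ x > a, HasDerivAt G (G' x) x) (hle : ∀ x > a, G' x ≤ φ x)
    (hint : IntegrableOn φ (Ioi a)) (ha : Tendsto G (𝓝[>] a) (𝓝 m)) (hinf : Tendsto G atTop (𝓝 l)) :
    l - m ≤ ∫ x in Ioi a, φ x := by
  have hcover : AECover (volume.restrict (Ioi a)) (𝓝[>] a ×ˢ atTop)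
      fun p : ℝ × ℝ => Ioi p.1 ∩ Iic p.2 :=
    (aecover_Ioi_of_Ioi (tendsto_fst.mono_right nhdsWithin_le_nhds)).inter
      (aecover_Iic tendsto_snd)
  refine le_of_tendsto_of_tendsto ((hinf.comp tendsto_snd).sub (ha.comp tendsto_fst))
    (hcover.integral_tendsto_of_countably_generated hint) ?_
  filter_upwards [prod_mem_prod (Ioo_mem_nhdsGT (lt_add_one a)) (Ici_mem_atTop (a + 1))]
    with ⟨ε, R⟩ ⟨hε, hR⟩
  have hεR : ε ≤ R := hε.2.le.trans hR
  have hIoi : Ioi ε ∩ Iic R ⊆ Ioi a := fun x hx => hε.1.trans hx.1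
  rw [Measure.restrict_restrict (measurableSet_Ioi.inter measurableSet_Iic),
    inter_eq_left.2 hIoi, Ioi_inter_Iic, ← intervalIntegral.integral_of_le hεR]
  exact intervalIntegral.sub_le_integral_of_hasDeriv_right_of_le hεR
    (fun x hx => (hderiv x (hε.1.trans_le hx.1)).continuousAt.continuousWithinAt)
    (fun x hx => (hderiv x (hε.1.trans hx.1)).hasDerivWithinAt)
    (hint.mono_set fun x hx => hε.1.trans_le hx.1) fun x hx => hle x (hε.1.trans hx.1)

theorem inv_isBigO_inv_of_hasDerivAt {f : ℝ → ℝ} {f' : ℝ} (hf : HasDerivAt f f' 0)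
    (hf0 : f 0 = 0) (hf' : f' ≠ 0) : (fun x => (f x)⁻¹) =O[𝓝[≠] 0] fun x => x⁻¹ := by
  have htheta : f =Θ[𝓝 0] fun x => x := by
    simpa only [hf0, sub_zero] using
      hf.hasFDerivAt.isTheta_sub (isClosedEmbedding_smul_left hf').isInducing
  refine (htheta.isBigO_symm.mono nhdsWithin_le_nhds).inv_rev ?_
  filter_upwards [self_mem_nhdsWithin] with x hx hx0 using absurd hx0 hx

/-- Multipliers certifying that `∫ x in Ioi 0, (w' ^ 2 - V * w ^ 2)` is nonnegative whenever
`w 0 = 0` and `∫ x in Ioi 0, w * Z = 0`: `h` is a supersolution of the Euler-Lagrange equation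
`h'' + V h = Z`, and `P` solves the Riccati inequality of the Poincaré inequality with weights
`Z h` and `h ^ 2`. -/
structure IsVirialCertificate (V Z h P : ℝ → ℝ) : Prop where
  pos : ∀ x > 0, 0 < h x
  weight_nonneg : ∀ x > 0, 0 ≤ Z x
  differentiable : Differentiable ℝ h
  differentiable_deriv : Differentiable ℝ (deriv h)
  differentiable_weight : Differentiable ℝ Z
  differentiableAt_riccati : ∀ x > 0, DifferentiableAt ℝ P x
  supersolution : ∀ x > 0, deriv (deriv h) x + V x * h x ≤ Z x
  riccati : ∀ x > 0, deriv P x + Z x * h x * P x ^ 2 + 1 / h x ^ 2 ≤ 0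
  map_zero : h 0 = 0
  deriv_zero_ne : deriv h 0 ≠ 0
  weight_zero : Z 0 = 0
  isBigO_zero : P =O[𝓝[>] 0] fun x => (x ^ 3)⁻¹
  inv_isBigO_one : (fun x => (h x)⁻¹) =O[atTop] fun _ => (1 : ℝ)
  deriv_isBigO_one : deriv h =O[atTop] fun _ => (1 : ℝ)
  exists_rate : ∃ b > 0, (Z =O[atTop] fun x => Real.exp (-b * x)) ∧
    P =o[atTop] fun x => Real.exp (2 * b * x)

/-- The endpoint contribution of integrating `w' ^ 2 - V * w ^ 2` by parts against the multipliers
of an `IsVirialCertificate`; `M` stands for a primitive of `w * Z`. -/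
noncomputable def boundaryTerm (h P w M : ℝ → ℝ) (x : ℝ) : ℝ :=
  deriv h x / h x * w x ^ 2 - 2 * M x * w x / h x + P x * M x ^ 2

namespace IsVirialCertificate

variable {V Z h P w M : ℝ → ℝ}

theorem exists_hasDerivAt_boundaryTerm_le (hc : IsVirialCertificate V Z h P) {x : ℝ} (hx : 0 < x)
    (hw : DifferentiableAt ℝ w x) (hM : HasDerivAt M (w x * Z x) x) :
    ∃ G' ≤ deriv w x ^ 2 - V x * w x ^ 2, HasDerivAt (boundaryTerm h P w M) G' x := by
  have hh := hc.pos x hx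
  have hderivh := (hc.differentiable x).hasDerivAt
  refine ⟨_, ?_, ((((hc.differentiable_deriv x).hasDerivAt.fun_div hderivh hh.ne').fun_mul
    (hw.hasDerivAt.fun_pow 2)).fun_sub (((hM.const_mul 2).fun_mul hw.hasDerivAt).fun_div hderivh
      hh.ne')).fun_add ((hc.differentiableAt_riccati x hx).hasDerivAt.fun_mul (hM.fun_pow 2))⟩
  have hsupersolution : 0 ≤ w x ^ 2 / h x * (Z x - deriv (deriv h) x - V x * h x) :=
    mul_nonneg (by positivity) (by linarith [hc.supersolution x hx])
  have hriccati : 0 ≤ M x ^ 2 * -(deriv P x + Z x * h x * P x ^ 2 + 1 / h x ^ 2) :=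
    mul_nonneg (by positivity) (neg_nonneg.2 (hc.riccati x hx))
  have hcross : 0 ≤ Z x * h x * (w x / h x - P x * M x) ^ 2 :=
    mul_nonneg (mul_nonneg (hc.weight_nonneg x hx) hh.le) (sq_nonneg _)
  have hsquare := sq_nonneg (deriv w x - deriv h x * w x / h x + M x / h x)
  rw [← sub_nonneg]
  refine (add_nonneg (add_nonneg hsquare hsupersolution) (add_nonneg hcross hriccati)).trans_eq ?_
  push_cast
  field_simp
  ring

theorem tendsto_boundaryTerm_zero (hc : IsVirialCertificate V Z h P) (hw : w =O[𝓝[>] 0] fun x => x)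
    (hM : M =O[𝓝[>] 0] fun x => x ^ 3) :
    Tendsto (boundaryTerm h P w M) (𝓝[>] 0) (𝓝 0) := by
  have hinv : (fun x => (h x)⁻¹) =O[𝓝[>] 0] fun x => x⁻¹ :=
    (inv_isBigO_inv_of_hasDerivAt (hc.differentiable 0).hasDerivAt hc.map_zero
      hc.deriv_zero_ne).mono (nhdsGT_le_nhdsNE 0)
  have hderiv : deriv h =O[𝓝[>] 0] fun _ => (1 : ℝ) :=
    ((hc.differentiable_deriv.continuous.tendsto 0).mono_left nhdsWithin_le_nhds).isBigO_one ℝ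
  have hpow : ∀ {f : ℝ → ℝ} {n : ℕ}, n ≠ 0 → (f =O[𝓝[>] 0] fun x => x ^ n) →
      Tendsto f (𝓝[>] 0) (𝓝 0) := fun {_ n} hn hf =>
    hf.trans_tendsto <| ((continuous_pow n).tendsto' 0 0 (zero_pow hn)).mono_left nhdsWithin_le_nhds
  have hlog := hpow one_ne_zero <| ((hderiv.mul hinv).mul (hw.pow 2)).congr' .rfl <| by
    filter_upwards [self_mem_nhdsWithin] with x (hx : 0 < x)
    field_simp
  have hcross := hpow three_ne_zero <|
    (((hM.const_mul_left 2).mul hw).mul hinv).congr' .rfl <| by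
      filter_upwards [self_mem_nhdsWithin] with x (hx : 0 < x)
      field_simp
  have hP := hpow three_ne_zero <| (hc.isBigO_zero.mul (hM.pow 2)).congr' .rfl <| by
    filter_upwards [self_mem_nhdsWithin] with x (hx : 0 < x)
    field_simp
  unfold boundaryTerm
  simpa only [div_eq_mul_inv, add_zero, sub_zero] using (hlog.sub hcross).add hP

theorem tendsto_boundaryTerm_atTop (hc : IsVirialCertificate V Z h P)
    (hw : Tendsto w atTop (𝓝 0)) {b : ℝ} (hb : 0 < b)
    (hP : P =o[atTop] fun x => Real.exp (2 * b * x))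
    (hM : M =O[atTop] fun x => Real.exp (-b * x)) :
    Tendsto (boundaryTerm h P w M) atTop (𝓝 0) := by
  have hM0 : Tendsto M atTop (𝓝 0) := hM.trans_tendsto <| Real.tendsto_exp_comp_nhds_zero.2 <|
    tendsto_id.const_mul_atTop_of_neg (neg_lt_zero.2 hb)
  have hlog := (hc.deriv_isBigO_one.mul hc.inv_isBigO_one).mul_isLittleO
    ((isLittleO_one_iff ℝ).2 (by simpa using hw.pow 2))
  have hcross := ((isLittleO_one_iff ℝ).2 (by simpa using (hM0.const_mul 2).mul hw)).mul_isBigO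
    hc.inv_isBigO_one
  have hPM := (hP.mul_isBigO (hM.pow 2)).congr_right (g₂ := fun _ => (1 : ℝ)) fun x => by
    rw [← Real.exp_nat_mul, ← Real.exp_add, Real.exp_eq_one_iff]
    push_cast
    ring
  simp only [mul_one, isLittleO_one_iff] at hlog hcross hPM
  unfold boundaryTerm
  simpa only [div_eq_mul_inv, add_zero, sub_zero] using (hlog.sub hcross).add hPM

theorem integral_nonneg (hc : IsVirialCertificate V Z h P) (hw : Differentiable ℝ w) (hw0 : w 0 = 0)
    (hw2 : IntegrableOn (fun x => w x ^ 2) (Ioi 0))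
    (hdw2 : IntegrableOn (fun x => deriv w x ^ 2) (Ioi 0))
    (hVw2 : IntegrableOn (fun x => V x * w x ^ 2) (Ioi 0))
    (horth : ∫ x in Ioi 0, w x * Z x = 0) :
    0 ≤ ∫ x in Ioi 0, (deriv w x ^ 2 - V x * w x ^ 2) := by
  obtain ⟨b, hb, hZ, hP⟩ := hc.exists_rate
  set M : ℝ → ℝ := fun x => ∫ t in (0 : ℝ)..x, w t * Z t
  have hwZ : Continuous fun x => w x * Z x :=
    hw.continuous.mul hc.differentiable_weight.continuous
  have hw_atTop := tendsto_zero_of_integrableOn_sq hw hw2 hdw2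
  have hid : ∀ {f : ℝ → ℝ}, Differentiable ℝ f → f 0 = 0 → f =O[𝓝[>] 0] fun x => x :=
    fun hf hf0 => by
      simpa only [hf0, sub_zero] using
        (hf 0).hasDerivAt.isBigO_sub.mono (nhdsWithin_le_nhds (s := Ioi 0))
  have hM_zero : M =O[𝓝[>] 0] fun x => x ^ 3 := isBigO_intervalIntegral_pow_succ <| by
    simpa only [sq] using (hid hw hw0).mul (hid hc.differentiable_weight hc.weight_zero)
  have hwZ_exp : (fun x => w x * Z x) =O[atTop] fun x => Real.exp (-b * x) := by
    simpa only [one_mul] using (hw_atTop.isBigO_one ℝ).mul hZ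
  have hwZ_int : IntegrableOn (fun x => w x * Z x) (Ioi 0) :=
    integrable_of_isBigO_exp_neg hb hwZ.continuousOn hwZ_exp
  -- By orthogonality `M x` is also `-∫ t in Ioi x, w t * Z t`, hence decays like `Z`.
  have hM_atTop : M =O[atTop] fun x => Real.exp (-b * x) := by
    refine (isBigO_integral_Ioi_exp_neg hb hwZ_exp).neg_left.congr' ?_ .rfl
    filter_upwards [eventually_ge_atTop 0] with x hx
    have hsplit := intervalIntegral.integral_interval_add_Ioi hwZ_int
      (hwZ_int.mono_set (Ioi_subset_Ioi hx))
    linarith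
  have hM : ∀ x, HasDerivAt M (w x * Z x) x := fun x =>
    (hwZ.integral_hasStrictDerivAt 0 x).hasDerivAt
  choose! G' hle hG' using fun x (hx : x > 0) =>
    hc.exists_hasDerivAt_boundaryTerm_le hx (hw x) (hM x)
  simpa only [sub_zero] using sub_le_integral_Ioi_of_hasDerivAt_le hG' hle (hdw2.sub hVw2)
    (hc.tendsto_boundaryTerm_zero (hid hw hw0) hM_zero)
    (hc.tendsto_boundaryTerm_atTop hw_atTop hb hP hM_atTop)

theorem integral_nonneg_of_odd (hc : IsVirialCertificate V Z h P) (hV : V.Even) (hZ : Z.Odd)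
    (hw_odd : w.Odd) (hw : Differentiable ℝ w) (hw2 : Integrable fun x => w x ^ 2)
    (hdw2 : Integrable fun x => deriv w x ^ 2) (hVw2 : Integrable fun x => V x * w x ^ 2)
    (horth : ∫ x, w x * Z x = 0) : 0 ≤ ∫ x, (deriv w x ^ 2 - V x * w x ^ 2) := by
  have hform : Function.Even fun x => deriv w x ^ 2 - V x * w x ^ 2 := fun x => by
    simp only [deriv_even_of_odd hw_odd x, hV x, hw_odd x, neg_sq]
  have hhalf := integral_eq_two_mul_integral_Ioi_of_even (hw_odd.mul_odd hZ)
  simp only [Pi.mul_apply, horth, zero_eq_mul, two_ne_zero, false_or] at hhalf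
  rw [integral_eq_two_mul_integral_Ioi_of_even hform]
  exact mul_nonneg zero_le_two <| hc.integral_nonneg hw hw_odd.map_zero hw2.integrableOn
    hdw2.integrableOn hVw2.integrableOn hhalf

end IsVirialCertificate

/-- `cosh (8 * s)` as a polynomial in `r = sinh s ^ 2`. -/
noncomputable def coshEight (r : ℝ) : ℝ := 1 + 32 * r + 160 * r ^ 2 + 256 * r ^ 3 + 128 * r ^ 4

/-- `sinh (8 * s) / (sinh s * cosh s)` as a polynomial in `r = sinh s ^ 2`. -/
noncomputable def sinhEight (r : ℝ) : ℝ := 8 * (1 + 2 * r) * (1 + 8 * r + 8 * r ^ 2)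

theorem cosh_eight_mul (s : ℝ) : cosh (8 * s) = coshEight (sinh s ^ 2) := by
  have hquadruple : cosh (4 * s) = 1 + 8 * sinh s ^ 2 + 8 * (sinh s ^ 2) ^ 2 := by
    rw [show 4 * s = 2 * (2 * s) by ring, cosh_two_mul, cosh_sq, sinh_two_mul, mul_pow, mul_pow,
      cosh_sq]
    ring
  rw [show 8 * s = 2 * (4 * s) by ring, cosh_two_mul, sinh_sq, hquadruple, coshEight]
  ring

theorem sinh_eight_mul (s : ℝ) : sinh (8 * s) = sinh s * cosh s * sinhEight (sinh s ^ 2) := by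
  rw [show 8 * s = 2 * (2 * (2 * s)) by ring, sinh_two_mul, cosh_two_mul, cosh_sq, sinh_two_mul,
    sinh_two_mul, cosh_two_mul, mul_pow, mul_pow, cosh_sq, sinhEight]
  ring

theorem coshEight_pos {r : ℝ} (hr : 0 ≤ r) : 0 < coshEight r := by
  unfold coshEight
  positivity

theorem sinhEight_pos {r : ℝ} (hr : 0 ≤ r) : 0 < sinhEight r := by
  unfold sinhEight
  positivity

theorem tanh_pos {s : ℝ} (hs : 0 < s) : 0 < tanh s := by
  rw [tanh_eq_sinh_div_cosh]
  exact div_pos (sinh_pos_iff.2 hs) (cosh_pos s)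

theorem inv_tanh_le_two {s : ℝ} (hs : 1 ≤ s) : (tanh s)⁻¹ ≤ 2 := by
  have hsinh : s ≤ sinh s := self_le_sinh_iff.2 (by linarith)
  have hexp : exp (-s) ≤ 1 := exp_le_one_iff.2 (by linarith)
  rw [tanh_eq_sinh_div_cosh, inv_div, div_le_iff₀ (by linarith)]
  linarith [cosh_sub_sinh s]

theorem hasDerivAt_tanh (s : ℝ) : HasDerivAt tanh (1 / cosh s ^ 2) s := by
  rw [show tanh = fun t => sinh t / cosh t from funext tanh_eq_sinh_div_cosh]
  refine ((hasDerivAt_sinh s).fun_div (hasDerivAt_cosh s) (cosh_pos s).ne').congr_deriv ?_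
  rw [← sq, ← sq, cosh_sq_sub_sinh_sq]

theorem hasDerivAt_comp_sinh_sq {φ : ℝ → ℝ} {φ' s : ℝ} (hφ : HasDerivAt φ φ' (sinh s ^ 2)) :
    HasDerivAt (fun t => φ (sinh t ^ 2)) (φ' * (2 * sinh s * cosh s)) s := by
  simpa only [Nat.cast_ofNat, Nat.add_one_sub_one, pow_one] using!
    hφ.comp s ((hasDerivAt_sinh s).fun_pow 2)

theorem hasDerivAt_tanh_mul_comp_sinh_sq {φ : ℝ → ℝ} {φ' s : ℝ}
    (hφ : HasDerivAt φ φ' (sinh s ^ 2)) :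
    HasDerivAt (fun t => tanh t * φ (sinh t ^ 2))
      (φ (sinh s ^ 2) / (1 + sinh s ^ 2) + 2 * sinh s ^ 2 * φ') s := by
  refine ((hasDerivAt_tanh s).fun_mul (hasDerivAt_comp_sinh_sq hφ)).congr_deriv ?_
  rw [← cosh_sq', tanh_eq_sinh_div_cosh]
  have := (cosh_pos s).ne'
  field_simp

/-- The potential `V` in the variable `s = x / (8 * √2)`, multiplied by `(8 * √2) ^ 2 = 128`. -/
noncomputable def scaledPotential (s : ℝ) : ℝ :=
  1 / 2 * sech s ^ 2 + 3072 * tanh s * cosh s ^ 2 * tanh (8 * s) * sech (8 * s) ^ 2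

/-- The internal mode `Z₁` in the variable `s = x / (8 * √2)`, up to a constant factor. -/
noncomputable def scaledMode (s : ℝ) : ℝ := tanh (8 * s) * sech (8 * s) * cosh s

theorem scaledPotential_eq (s : ℝ) :
    scaledPotential s = 1 / (2 * (1 + sinh s ^ 2)) + 3072 * sinh s ^ 2 * (1 + sinh s ^ 2) *
      sinhEight (sinh s ^ 2) / coshEight (sinh s ^ 2) ^ 3 := by
  have hcosh := (cosh_pos s).ne'
  have hcosh8 := (coshEight_pos (sq_nonneg (sinh s))).ne'
  rw [scaledPotential, sech, sech, tanh_eq_sinh_div_cosh, tanh_eq_sinh_div_cosh, sinh_eight_mul,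
    cosh_eight_mul, ← cosh_sq']
  field_simp

theorem scaledMode_eq (s : ℝ) :
    scaledMode s = tanh s * cosh s * ((1 + sinh s ^ 2) * sinhEight (sinh s ^ 2) /
      coshEight (sinh s ^ 2) ^ 2) := by
  have hcosh := (cosh_pos s).ne'
  rw [scaledMode, sech, tanh_eq_sinh_div_cosh, tanh_eq_sinh_div_cosh, sinh_eight_mul,
    cosh_eight_mul, ← cosh_sq']
  field_simp

/-- The even factor of the supersolution `tanh s * profile (sinh s ^ 2)`; its coefficients were
found numerically. -/
noncomputable def profile (r : ℝ) : ℝ := (1 + 60 * r + 250 * r ^ 2) / (1 + 30 * r + 500 * r ^ 2)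

/-- The derivative of `tanh s * profile (sinh s ^ 2)`, in terms of `r = sinh s ^ 2`. -/
noncomputable def profileSlope (r : ℝ) : ℝ :=
  (1 + 150 * r + 1610 * r ^ 2 - 8500 * r ^ 3 + 80000 * r ^ 4) /
    ((1 + r) * (1 + 30 * r + 500 * r ^ 2) ^ 2)

/-- The derivative of `profileSlope`. -/
noncomputable def profileSlopeDeriv (r : ℝ) : ℝ :=
  (89 - 3370 * r - 260390 * r ^ 2 - 1910300 * r ^ 3 + 6875000 * r ^ 4 + 10900000 * r ^ 5
    - 40000000 * r ^ 6) / ((1 + r) ^ 2 * (1 + 30 * r + 500 * r ^ 2) ^ 3)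

theorem profile_pos {r : ℝ} (hr : 0 ≤ r) : 0 < profile r := by
  unfold profile
  positivity

theorem inv_profile_le_two {r : ℝ} (hr : 0 ≤ r) : (profile r)⁻¹ ≤ 2 := by
  rw [profile, inv_div, div_le_iff₀ (by positivity)]
  linarith

theorem abs_profileSlope_le {r : ℝ} (hr : 0 ≤ r) : |profileSlope r| ≤ 3 := by
  rw [profileSlope, abs_div, abs_of_pos (a := (1 + r) * _) (by positivity),
    div_le_iff₀ (by positivity), abs_le, ← sub_nonneg, ← sub_nonneg (b := _ - _ + _)]
  constructor <;> ring_nf <;> positivity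

theorem hasDerivAt_profile {r : ℝ} (hr : 0 ≤ r) : HasDerivAt profile
    ((30 - 500 * r - 22500 * r ^ 2) / (1 + 30 * r + 500 * r ^ 2) ^ 2) r := by
  have hdiv := ((1 + 60 * X + 250 * X ^ 2 : ℝ[X]).hasDerivAt r).fun_div
    ((1 + 30 * X + 500 * X ^ 2 : ℝ[X]).hasDerivAt r)
    (by simpa using (by positivity : 1 + 30 * r + 500 * r ^ 2 ≠ 0))
  refine HasDerivAt.congr_deriv (f' := _) (by simpa using! hdiv) ?_
  field_simp
  ring

theorem hasDerivAt_profileSlope {r : ℝ} (hr : 0 ≤ r) :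
    HasDerivAt profileSlope (profileSlopeDeriv r) r := by
  have hdiv := ((1 + 150 * X + 1610 * X ^ 2 - 8500 * X ^ 3 + 80000 * X ^ 4 : ℝ[X]).hasDerivAt
    r).fun_div (((1 + X) * (1 + 30 * X + 500 * X ^ 2) ^ 2 : ℝ[X]).hasDerivAt r)
    (by simpa using (by positivity : (1 + r) * (1 + 30 * r + 500 * r ^ 2) ^ 2 ≠ 0))
  refine HasDerivAt.congr_deriv (f' := _) (by simpa [derivative_pow] using! hdiv) ?_
  rw [profileSlopeDeriv]
  field_simp
  ring

theorem hasDerivAt_tanh_mul_profile (s : ℝ) :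
    HasDerivAt (fun t => tanh t * profile (sinh t ^ 2)) (profileSlope (sinh s ^ 2)) s := by
  refine (hasDerivAt_tanh_mul_comp_sinh_sq (hasDerivAt_profile (sq_nonneg _))).congr_deriv ?_
  rw [profileSlope, profile]
  field_simp
  ring

/-- The multiplier `h`, a supersolution of `h'' + (51 / 50) * scaledPotential * h = 45 * scaledMode`
on the positive half-line. -/
noncomputable def supersolution (s : ℝ) : ℝ := tanh s * profile (sinh s ^ 2)

/-- The multiplier `P`, a subsolution of the Riccati equation on the positive half-line. -/
noncomputable def riccatiWeight (s : ℝ) : ℝ := (tanh s ^ 3)⁻¹ * (1 / 144 - 40 * (sinh s ^ 2) ^ 3)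

-- Once denominators are cleared, the difference of the two sides has nonnegative coefficients.
theorem supersolution_inequality {r : ℝ} (hr : 0 ≤ r) :
    2 * (1 + r) * profileSlopeDeriv r + 51 / 50 * (1 / (2 * (1 + r)) +
      3072 * r * (1 + r) * sinhEight r / coshEight r ^ 3) * profile r ≤
      45 * ((1 + r) * sinhEight r / coshEight r ^ 2) := by
  unfold profileSlopeDeriv sinhEight coshEight profile
  field_simp
  rw [← sub_nonneg]
  ring_nf
  positivity

theorem riccati_inequality {r : ℝ} (hr : 0 ≤ r) :
    45 * (1 + r / 2) * (1 + r) ^ 2 * sinhEight r * profile r * (1 / 144 - 40 * r ^ 3) ^ 2 /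
      coshEight r ^ 2 + r / profile r ^ 2 ≤ 1 / 48 + 120 * r ^ 3 * (1 + 2 * r) := by
  unfold sinhEight coshEight profile
  field_simp
  rw [← sub_nonneg]
  ring_nf
  positivity

theorem deriv_supersolution : deriv supersolution = fun s => profileSlope (sinh s ^ 2) :=
  funext fun s => (hasDerivAt_tanh_mul_profile s).deriv

theorem hasDerivAt_deriv_supersolution (s : ℝ) : HasDerivAt (deriv supersolution)
    (profileSlopeDeriv (sinh s ^ 2) * (2 * sinh s * cosh s)) s := by
  rw [deriv_supersolution]
  exact hasDerivAt_comp_sinh_sq (hasDerivAt_profileSlope (sq_nonneg _))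

theorem deriv_deriv_supersolution_add_le {s : ℝ} (hs : 0 < s) :
    deriv (deriv supersolution) s + 51 / 50 * scaledPotential s * supersolution s ≤
      45 * scaledMode s := by
  have hr := sq_nonneg (sinh s)
  have hmode : 0 ≤ (1 + sinh s ^ 2) * sinhEight (sinh s ^ 2) / coshEight (sinh s ^ 2) ^ 2 := by
    have := sinhEight_pos hr
    positivity
  have hsinh : sinh s * cosh s = tanh s * (1 + sinh s ^ 2) := by
    rw [tanh_eq_sinh_div_cosh, ← cosh_sq']
    field_simp [(cosh_pos s).ne']
  rw [(hasDerivAt_deriv_supersolution s).deriv, scaledPotential_eq, scaledMode_eq, supersolution,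
    mul_assoc 2, hsinh]
  calc _ = tanh s * _ := by ring
    _ ≤ tanh s * _ := mul_le_mul_of_nonneg_left (supersolution_inequality hr) (tanh_pos hs).le
    _ ≤ tanh s * (45 * (cosh s * _)) := by
        gcongr
        · exact (tanh_pos hs).le
        · exact le_mul_of_one_le_left hmode (one_le_cosh s)
    _ = _ := by ring

theorem hasDerivAt_riccatiWeight {s : ℝ} (hs : 0 < s) : HasDerivAt riccatiWeight
    (-((1 + sinh s ^ 2) / (sinh s ^ 2) ^ 2 *
      (1 / 48 + 120 * (sinh s ^ 2) ^ 3 * (1 + 2 * sinh s ^ 2)))) s := by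
  have hcube : HasDerivAt (fun r => 1 / 144 - 40 * r ^ 3) (-(40 * (3 * (sinh s ^ 2) ^ 2)))
      (sinh s ^ 2) :=
    ((((hasDerivAt_id _).fun_pow 3).const_mul 40).const_sub (1 / 144)).congr_deriv (by simp)
  refine ((((hasDerivAt_tanh s).fun_pow 3).fun_inv (pow_pos (tanh_pos hs) 3).ne').fun_mul
    (hasDerivAt_comp_sinh_sq hcube)).congr_deriv ?_
  have : sinh s ≠ 0 := (sinh_pos_iff.2 hs).ne'
  have : cosh s ≠ 0 := (cosh_pos s).ne'
  have hr : 1 + 2 * sinh s ^ 2 = 2 * cosh s ^ 2 - 1 := by rw [cosh_sq]; ring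
  rw [tanh_eq_sinh_div_cosh, hr, ← cosh_sq', Nat.add_one_sub_one]
  field_simp
  ring

theorem cosh_le_one_add_sinh_sq_div_two (s : ℝ) : cosh s ≤ 1 + sinh s ^ 2 / 2 := by
  nlinarith [sq_nonneg (cosh s - 1), cosh_sq s]

theorem deriv_riccatiWeight_add_le {s : ℝ} (hs : 0 < s) :
    deriv riccatiWeight s + 45 * scaledMode s * supersolution s * riccatiWeight s ^ 2 +
      1 / supersolution s ^ 2 ≤ 0 := by
  have hr := sq_nonneg (sinh s)
  have : 0 < sinh s := sinh_pos_iff.2 hs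
  have : 0 < cosh s := cosh_pos s
  have hprofile := profile_pos hr
  have hsinhEight := sinhEight_pos hr
  have hcoshEight := coshEight_pos hr
  have hle : 45 * cosh s * (1 + sinh s ^ 2) ^ 2 * sinhEight (sinh s ^ 2) * profile (sinh s ^ 2) *
      (1 / 144 - 40 * (sinh s ^ 2) ^ 3) ^ 2 / coshEight (sinh s ^ 2) ^ 2 +
      sinh s ^ 2 / profile (sinh s ^ 2) ^ 2 ≤
      1 / 48 + 120 * (sinh s ^ 2) ^ 3 * (1 + 2 * sinh s ^ 2) := by
    refine le_trans ?_ (riccati_inequality hr)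
    gcongr
    exact cosh_le_one_add_sinh_sq_div_two s
  rw [(hasDerivAt_riccatiWeight hs).deriv, scaledMode_eq, supersolution, riccatiWeight]
  refine le_of_eq_of_le ?_ (mul_nonpos_of_nonneg_of_nonpos
    (by positivity : 0 ≤ (1 + sinh s ^ 2) / (sinh s ^ 2) ^ 2) (sub_nonpos.2 hle))
  rw [tanh_eq_sinh_div_cosh, ← cosh_sq']
  field_simp
  ring

theorem riccatiWeight_isBigO_zero : riccatiWeight =O[𝓝[>] 0] fun s => (s ^ 3)⁻¹ := by
  have htanh : (fun s => (tanh s)⁻¹) =O[𝓝[>] 0] fun s => s⁻¹ :=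
    (inv_isBigO_inv_of_hasDerivAt (hasDerivAt_tanh 0) tanh_zero (by simp)).mono (nhdsGT_le_nhdsNE 0)
  have hpoly : Continuous fun s => 1 / 144 - 40 * (sinh s ^ 2) ^ 3 := by fun_prop
  simpa only [inv_pow, mul_one] using! (htanh.pow 3).mul
    (((hpoly.tendsto 0).mono_left nhdsWithin_le_nhds).isBigO_one ℝ)

theorem inv_tanh_isBigO_one : (fun s => (tanh s)⁻¹) =O[atTop] fun _ => (1 : ℝ) := by
  refine .of_bound 2 ?_
  filter_upwards [eventually_ge_atTop 1] with s hs
  rw [norm_inv, Real.norm_of_nonneg (tanh_pos (by linarith)).le, norm_one, mul_one]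
  exact inv_tanh_le_two hs

theorem riccatiWeight_isLittleO_atTop : riccatiWeight =o[atTop] fun s => exp (2 * 7 * s) := by
  have hsinh : sinh =O[atTop] exp := by
    refine .of_bound 1 ?_
    filter_upwards [eventually_ge_atTop 0] with s hs
    rw [norm_of_nonneg (sinh_nonneg_iff.2 hs), norm_of_nonneg (exp_pos s).le]
    linarith [cosh_add_sinh s, cosh_pos s]
  have hpow : (fun s => exp s ^ 6) =o[atTop] fun s => exp (2 * 7 * s) := by
    simp only [← exp_nat_mul]
    have hgap : Tendsto (fun s : ℝ => 8 * s) atTop atTop :=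
      tendsto_id.const_mul_atTop (by norm_num)
    refine isLittleO_exp_comp_exp_comp.2 (hgap.congr fun s => ?_)
    push_cast
    ring
  have hone : (fun _ => 1 / 144 : ℝ → ℝ) =O[atTop] fun s => exp s ^ 6 :=
    (isLittleO_const_left.2 <| .inr <| tendsto_norm_atTop_atTop.comp <|
      (tendsto_pow_atTop (by norm_num)).comp tendsto_exp_atTop).isBigO
  have hpoly : (fun s => 1 / 144 - 40 * (sinh s ^ 2) ^ 3) =O[atTop] fun s => exp s ^ 6 := by
    simp only [← pow_mul]
    exact hone.sub ((hsinh.pow 6).const_mul_left 40)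
  refine IsBigO.trans_isLittleO ?_ hpow
  simpa only [inv_pow, one_pow, one_mul] using! (inv_tanh_isBigO_one.pow 3).mul hpoly

theorem scaledMode_nonneg {s : ℝ} (hs : 0 ≤ s) : 0 ≤ scaledMode s := by
  have : 0 ≤ sinh (8 * s) := sinh_nonneg_iff.2 (by positivity)
  have : 0 < cosh s := cosh_pos s
  have : 0 < cosh (8 * s) := cosh_pos (8 * s)
  rw [scaledMode, sech, tanh_eq_sinh_div_cosh]
  positivity

theorem scaledMode_isBigO : scaledMode =O[atTop] fun s => exp (-7 * s) := by
  refine .of_bound 2 ?_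
  filter_upwards [eventually_ge_atTop 0] with s hs
  have hsech : sech (8 * s) ≤ 2 * exp (-(8 * s)) := by
    rw [sech, div_le_iff₀ (cosh_pos _), exp_neg, ← div_eq_mul_inv, div_mul_eq_mul_div,
      one_le_div (exp_pos _)]
    linarith [cosh_add_sinh (8 * s), sinh_lt_cosh (8 * s)]
  have hcosh : cosh s ≤ exp s := by linarith [cosh_add_sinh s, sinh_nonneg_iff.2 hs]
  rw [norm_of_nonneg (scaledMode_nonneg hs), norm_of_nonneg (exp_pos _).le]
  calc scaledMode s ≤ 1 * (2 * exp (-(8 * s))) * exp s :=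
        mul_le_mul (mul_le_mul (tanh_lt_one _).le hsech (one_div_nonneg.2 (cosh_pos _).le)
          zero_le_one) hcosh (cosh_pos s).le (by positivity)
    _ = 2 * exp (-7 * s) := by
        rw [one_mul, mul_assoc, ← exp_add]
        ring_nf

theorem differentiable_scaledMode : Differentiable ℝ scaledMode := by
  have htanh : Differentiable ℝ tanh := fun s => (hasDerivAt_tanh s).differentiableAt
  have hcosh : ∀ s, cosh (8 * s) ≠ 0 := fun s => (cosh_pos _).ne'
  unfold scaledMode sech
  fun_prop (disch := exact hcosh _)

theorem isVirialCertificate_supersolution :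
    IsVirialCertificate (fun s => 51 / 50 * scaledPotential s)
      (fun s => 45 * scaledMode s) supersolution riccatiWeight where
  pos s hs := mul_pos (tanh_pos hs) (profile_pos (sq_nonneg _))
  weight_nonneg _ hs := mul_nonneg (by norm_num) (scaledMode_nonneg hs.le)
  differentiable s := (hasDerivAt_tanh_mul_profile s).differentiableAt
  differentiable_deriv s := (hasDerivAt_deriv_supersolution s).differentiableAt
  differentiable_weight := differentiable_scaledMode.const_mul 45
  differentiableAt_riccati _ hs := (hasDerivAt_riccatiWeight hs).differentiableAt
  supersolution _ hs := deriv_deriv_supersolution_add_le hs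
  riccati _ hs := deriv_riccatiWeight_add_le hs
  map_zero := by simp [supersolution]
  deriv_zero_ne := by simp [deriv_supersolution, profileSlope]
  weight_zero := by simp [scaledMode]
  isBigO_zero := riccatiWeight_isBigO_zero
  inv_isBigO_one := by
    have hprofile : (fun s => (profile (sinh s ^ 2))⁻¹) =O[atTop] fun _ => (1 : ℝ) :=
      .of_bound 2 <| .of_forall fun s => by
        rw [norm_inv, norm_of_nonneg (profile_pos (sq_nonneg _)).le, norm_one, mul_one]
        exact inv_profile_le_two (sq_nonneg _)
    simpa only [supersolution, mul_inv, mul_one] using inv_tanh_isBigO_one.mul hprofile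
  deriv_isBigO_one := by
    rw [deriv_supersolution]
    exact .of_bound 3 <| .of_forall fun s => by
      simpa using abs_profileSlope_le (sq_nonneg (sinh s))
  exists_rate := ⟨7, by norm_num, scaledMode_isBigO.const_mul_left 45,
    riccatiWeight_isLittleO_atTop⟩

theorem abs_scaledPotential_le (s : ℝ) : |scaledPotential s| ≤ 3073 := by
  have hr := sq_nonneg (sinh s)
  rw [scaledPotential_eq]
  generalize sinh s ^ 2 = r at hr
  have hsinhEight := sinhEight_pos hr
  have hcoshEight := coshEight_pos hr
  have hquot : r * (1 + r) * sinhEight r / coshEight r ^ 3 ≤ 1 := by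
    rw [div_le_one (by positivity), ← sub_nonneg]
    unfold sinhEight coshEight
    ring_nf
    positivity
  rw [abs_of_nonneg (by positivity)]
  calc 1 / (2 * (1 + r)) + 3072 * r * (1 + r) * sinhEight r / coshEight r ^ 3
      = 1 / (2 * (1 + r)) + 3072 * (r * (1 + r) * sinhEight r / coshEight r ^ 3) := by ring
    _ ≤ 1 + 3072 * 1 := by
        gcongr
        rw [div_le_one (by positivity)]
        linarith
    _ = 3073 := by norm_num

theorem continuous_scaledPotential : Continuous scaledPotential := by
  have htanh : Continuous tanh := continuous_iff_continuousAt.2 fun s =>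
    (hasDerivAt_tanh s).continuousAt
  have hsech : Continuous sech :=
    continuous_const.div continuous_cosh fun s => (cosh_pos s).ne'
  unfold scaledPotential
  fun_prop

theorem scaledPotential_even : scaledPotential.Even := fun s => by
  simp only [scaledPotential, sech, mul_neg, tanh_neg, cosh_neg, neg_mul, neg_neg]

theorem scaledMode_odd : scaledMode.Odd := fun s => by
  simp only [scaledMode, sech, mul_neg, tanh_neg, cosh_neg, neg_mul]

theorem Vpot_eq (x : ℝ) : Vpot x = scaledPotential (x / (8 * √2)) / 128 := by
  rw [Vpot, scaledPotential, show 8 * (x / (8 * √2)) = x / √2 by field_simp]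
  ring

theorem Z1_eq (x : ℝ) : Z1 x = 2 ^ (-(3 : ℝ) / 4) * √3 * scaledMode (x / (8 * √2)) := by
  rw [Z1, scaledMode, show 8 * (x / (8 * √2)) = x / √2 by field_simp]
  ring

theorem integrable_Vpot_mul {f : ℝ → ℝ} (hf : Integrable f) : Integrable fun x => Vpot x * f x := by
  have hcont : Continuous Vpot := by
    rw [funext Vpot_eq]
    exact (continuous_scaledPotential.comp (continuous_id.div_const _)).div_const _
  refine hf.bdd_mul (c := 3073) hcont.aestronglyMeasurable (.of_forall fun x => ?_)
  rw [Vpot_eq, norm_div, norm_eq_abs]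
  exact (div_le_self (abs_nonneg _) (by norm_num)).trans (abs_scaledPotential_le _)

theorem integral_deriv_sq_sub_comp_mul_left (V w : ℝ → ℝ) {c : ℝ} (hc : 0 < c) :
    ∫ x, (deriv (fun y => w (c * y)) x ^ 2 - c ^ 2 * V (c * x) * w (c * x) ^ 2) =
      c * ∫ x, (deriv w x ^ 2 - V x * w x ^ 2) := by
  have hscale := Measure.integral_comp_mul_left (fun x => deriv w x ^ 2 - V x * w x ^ 2) c
  rw [abs_of_pos (inv_pos.2 hc), smul_eq_mul] at hscale
  calc _ = ∫ x, c ^ 2 * (deriv w (c * x) ^ 2 - V (c * x) * w (c * x) ^ 2) := by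
        congr 1 with x
        rw [deriv_comp_mul_left, smul_eq_mul]
        ring
    _ = _ := by
        rw [integral_const_mul, hscale]
        field_simp

theorem integral_mul_scaledMode_eq_zero {w : ℝ → ℝ} (horth : ∫ x, w x * Z1 x = 0) :
    ∫ s, w (8 * √2 * s) * (45 * scaledMode s) = 0 := by
  have hZ1 : ∀ s, w (8 * √2 * s) * (45 * scaledMode s) =
      45 / (2 ^ (-(3 : ℝ) / 4) * √3) * (w (8 * √2 * s) * Z1 (8 * √2 * s)) := fun s => by
    rw [Z1_eq, mul_div_cancel_left₀ s (by positivity)]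
    field_simp
  simp only [hZ1, integral_const_mul, horth, smul_zero, mul_zero,
    Measure.integral_comp_mul_left (fun x => w x * Z1 x)]

theorem integral_deriv_sq_sub_amplified_nonneg {w : ℝ → ℝ} (hw_odd : w.Odd)
    (hw : Differentiable ℝ w) (hw2 : Integrable fun x => w x ^ 2)
    (hdw2 : Integrable fun x => deriv w x ^ 2) (horth : ∫ x, w x * Z1 x = 0) :
    0 ≤ ∫ x, (deriv w x ^ 2 - 51 / 50 * Vpot x * w x ^ 2) := by
  have hc : 0 < 8 * √2 := by positivity
  have hpotential : ∀ s, (8 * √2) ^ 2 * (51 / 50 * Vpot (8 * √2 * s)) =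
      51 / 50 * scaledPotential s := fun s => by
    rw [Vpot_eq, mul_div_cancel_left₀ s hc.ne', mul_pow, sq_sqrt zero_le_two]
    ring
  have hodd : Function.Odd fun s => w (8 * √2 * s) := fun s => by
    simp only [mul_neg, hw_odd _]
  have hu2 := hw2.comp_mul_left' hc.ne'
  have hdu2 : Integrable fun s => deriv (fun t => w (8 * √2 * t)) s ^ 2 := by
    simpa only [deriv_comp_mul_left, smul_eq_mul, mul_pow (8 * √2)] using
      (hdw2.comp_mul_left' hc.ne').const_mul ((8 * √2) ^ 2)
  have hVu2 : Integrable fun s => 51 / 50 * scaledPotential s * w (8 * √2 * s) ^ 2 :=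
    (((integrable_Vpot_mul hw2).comp_mul_left' hc.ne').const_mul
      ((8 * √2) ^ 2 * (51 / 50))).congr <| .of_forall fun s => by
        simp only [← hpotential]
        ring
  have hform := integral_deriv_sq_sub_comp_mul_left (fun x => 51 / 50 * Vpot x) w hc
  simp only [hpotential] at hform
  refine (mul_nonneg_iff_of_pos_left hc).1 (hform ▸ ?_)
  exact isVirialCertificate_supersolution.integral_nonneg_of_odd
    (fun s => congrArg _ (scaledPotential_even s))
    (fun s => by simp only [scaledMode_odd s, mul_neg]) hodd (by fun_prop) hu2 hdu2 hVu2
    (integral_mul_scaledMode_eq_zero horth)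

end KinkVirial

theorem coercivity_Bsharp :
    ∃ κ > 0, ∀ w : ℝ → ℝ,
      (∀ x : ℝ, w (-x) = -w x) →
      Differentiable ℝ w →
      Integrable (fun x => (w x) ^ 2) →
      Integrable (fun x => (deriv w x) ^ 2) →
      (∫ x : ℝ, w x * Z1 x) = 0 →
      (∫ x : ℝ, ((deriv w x) ^ 2 - Vpot x * (w x) ^ 2))
        ≥ κ * (∫ x : ℝ, (deriv w x) ^ 2) := by
  refine ⟨1 / 51, by norm_num, fun w hodd hw hw2 hdw2 horth => ?_⟩
  have hVw2 := KinkVirial.integrable_Vpot_mul hw2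
  have hamplified :=
    KinkVirial.integral_deriv_sq_sub_amplified_nonneg hodd hw hw2 hdw2 horth
  simp only [mul_assoc] at hamplified
  rw [integral_sub hdw2 (hVw2.const_mul _), integral_const_mul] at hamplified
  rw [integral_sub hdw2 hVw2]
  linarith
end

section
/- Let V(x) = (1/256)·sech²(x/(8√2)) + 24·tanh(x/(8√2))·cosh²(x/(8√2))·tanh(x/√2)·sech²(x/√2) and Z₁(x) = 2^(-3/4)·√3·tanh(x/√2)·sech(x/√2)·cosh(x/(8√2)). There exist constants C > 0 and κ > 0 such that for every odd differentiable function w : ℝ → ℝ with w and w' square integrable on ℝ, one has ∫_ℝ ( w'(x)² - V(x)·w(x)² ) dx + C·( ∫_ℝ w(x)·Z₁(x) dx )² ≥ κ·∫_ℝ w'(x)² dx. -/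
open MeasureTheory

/-!
Rescale the line by `√2` and use parity to pass to functions on `[0, ∞)` vanishing at `0`; let `P`
and `Z` be the rescaled potential and mode. For every `c`,
`125 * (∫ Z w) ^ 2 ≥ 2 * c * ∫ Z w - c ^ 2 / 125`, so it is enough to find one `c` for which
`∫ (w' ^ 2 - 1.01 * P * w ^ 2 + 2 * c * Z * w) ≥ c ^ 2 / 125`.

If `P * g ≤ Z - g''` and `(Z - g'') * u ≤ -u'' * g` with `g, u > 0`, then Picone's identity applied
to `w - c * g` with the barrier `u` shows that the last integrand exceeds the derivative of an
explicit flux by at least `c ^ 2 * Z * g`. One such pair `(g, u)` is available near `0`, another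
near infinity. Choosing `c` so that `w - c * g` vanishes at the gluing point makes the flux there
equal to `c ^ 2 * g * g'`, and the jump of `g'` is smaller than what the source `Z * g` contributes.
-/

open Filter Set
open scoped Topology

/-! ### Hyperbolic functions -/

theorem sech_pos (y : ℝ) : 0 < sech y := one_div_pos.2 (Real.cosh_pos y)

theorem sech_le_one (y : ℝ) : sech y ≤ 1 :=
  div_le_one_of_le₀ (Real.one_le_cosh y) (Real.cosh_pos y).le

theorem sech_neg (y : ℝ) : sech (-y) = sech y := by rw [sech, sech, Real.cosh_neg]

theorem sech_le_two_mul_exp_neg (y : ℝ) : sech y ≤ 2 * Real.exp (-y) := by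
  rw [sech, div_le_iff₀ (Real.cosh_pos y), Real.cosh_eq]
  have h : Real.exp (-y) * Real.exp y = 1 := by rw [← Real.exp_add, neg_add_cancel, Real.exp_zero]
  nlinarith [sq_nonneg (Real.exp (-y))]

theorem continuous_sech : Continuous sech :=
  continuous_const.div Real.continuous_cosh fun y => (Real.cosh_pos y).ne'

theorem hasDerivAt_sech (y : ℝ) : HasDerivAt sech (-(Real.tanh y * sech y)) y := by
  have h := (Real.hasDerivAt_cosh y).inv (Real.cosh_pos y).ne'
  refine (h.congr_of_eventuallyEq (.of_forall fun x => one_div _)).congr_deriv ?_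
  rw [Real.tanh_eq_sinh_div_cosh, sech]
  ring

theorem tendsto_sech_atTop : Tendsto sech atTop (𝓝 0) := by
  have h : Tendsto (fun y : ℝ => 2 * Real.exp (-y)) atTop (𝓝 0) := by
    simpa using Real.tendsto_exp_neg_atTop_nhds_zero.const_mul 2
  exact squeeze_zero (fun y => (sech_pos y).le) sech_le_two_mul_exp_neg h

theorem tanh_nonneg_of_nonneg {y : ℝ} (hy : 0 ≤ y) : 0 ≤ Real.tanh y := by
  rw [Real.tanh_eq_sinh_div_cosh]
  exact div_nonneg (Real.sinh_nonneg_iff.2 hy) (Real.cosh_pos y).le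

theorem continuous_tanh : Continuous Real.tanh := by
  simp only [funext Real.tanh_eq_sinh_div_cosh]
  exact Real.continuous_sinh.div Real.continuous_cosh fun y => (Real.cosh_pos y).ne'

theorem cosh_eq_two_mul_cosh_half_sq_sub_one (y : ℝ) :
    Real.cosh y = 2 * Real.cosh (y / 2) ^ 2 - 1 := by
  have h := Real.cosh_two_mul (y / 2)
  rw [mul_div_cancel₀ y two_ne_zero, Real.sinh_sq] at h
  linarith

theorem cosh_half_le (y : ℝ) : Real.cosh (y / 2) ≤ (3 + Real.cosh y) / 4 := by
  nlinarith [cosh_eq_two_mul_cosh_half_sq_sub_one y, sq_nonneg (Real.cosh (y / 2) - 1)]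

theorem cosh_eq_one_add_sinh_quarter (y : ℝ) :
    Real.cosh y = 1 + 8 * Real.sinh (y / 4) ^ 2 + 8 * (Real.sinh (y / 4) ^ 2) ^ 2 := by
  rw [cosh_eq_two_mul_cosh_half_sq_sub_one, cosh_eq_two_mul_cosh_half_sq_sub_one (y / 2),
    div_div, show (2 : ℝ) * 2 = 4 by norm_num, Real.cosh_sq (y / 4)]
  ring

theorem sinh_eq_sinh_quarter_mul (y : ℝ) :
    Real.sinh y
      = 4 * Real.sinh (y / 4) * (1 + 2 * Real.sinh (y / 4) ^ 2) * Real.cosh (y / 4) := by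
  have h2 := Real.sinh_two_mul (y / 2)
  have h4 := Real.sinh_two_mul (y / 4)
  have hc := Real.cosh_two_mul (y / 4)
  rw [show 2 * (y / 4) = y / 2 by ring] at h4 hc
  rw [mul_div_cancel₀ y two_ne_zero, h4, hc, Real.cosh_sq] at h2
  rw [h2]
  ring

theorem cosh_quarter_le (y : ℝ) : Real.cosh (y / 4) ≤ 1 + Real.sinh (y / 4) ^ 2 / 2 := by
  have h := cosh_half_le (y / 2)
  rw [cosh_eq_two_mul_cosh_half_sq_sub_one (y / 2), div_div,
    show (2 : ℝ) * 2 = 4 by norm_num, Real.cosh_sq (y / 4)] at h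
  linarith

theorem cosh_eighth_le (y : ℝ) : Real.cosh (y / 8) ≤ 1 + Real.sinh (y / 4) ^ 2 / 8 := by
  have h := cosh_half_le (y / 4)
  rw [div_div, show (4 : ℝ) * 2 = 8 by norm_num] at h
  linarith [cosh_quarter_le y]

theorem tanh_mul_sech_eq_sinh_div (y : ℝ) :
    Real.tanh y * sech y = Real.sinh y / Real.cosh y ^ 2 := by
  rw [Real.tanh_eq_sinh_div_cosh, sech]
  field_simp

theorem sech_le_two_mul_exp_neg_div_four_pow (y : ℝ) : sech y ≤ 2 * Real.exp (-y / 4) ^ 4 := by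
  have h : Real.exp (-y / 4) ^ 4 = Real.exp (-y) := by
    rw [← Real.exp_nat_mul]; congr 1; push_cast; ring
  rw [h]
  exact sech_le_two_mul_exp_neg y

theorem exp_div_four_mul_exp_neg (y : ℝ) : Real.exp (y / 4) * Real.exp (-y / 4) = 1 := by
  rw [← Real.exp_add, ← add_div, add_neg_cancel, zero_div, Real.exp_zero]

theorem tanh_mul_sech_eq_of_exp {y s : ℝ} (hs : s = Real.exp (-y / 4)) :
    Real.tanh y * sech y = 2 * s ^ 4 * (1 - s ^ 8) / (1 + s ^ 8) ^ 2 := by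
  have hexp : Real.exp (-y) = s ^ 4 := by
    rw [hs, ← Real.exp_nat_mul]; congr 1; push_cast; ring
  have hexp' : Real.exp y = (s ^ 4)⁻¹ := by rw [← hexp, Real.exp_neg, inv_inv]
  have hs0 : 0 < s := hs ▸ Real.exp_pos _
  rw [Real.tanh_eq, sech, Real.cosh_eq, hexp, hexp']
  field_simp

/-- Substituting this for `x` turns a polynomial that is positive on `[a, b)` into a rational
function of `t ≥ 0` whose positivity is visible from the signs of the coefficients. -/
theorem exists_nonneg_eq_add_mul_div {a b x : ℝ} (ha : a ≤ x) (hb : x < b) :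
    ∃ t : ℝ, 0 ≤ t ∧ x = (a + b * t) / (1 + t) := by
  have h : 0 < b - x := sub_pos.2 hb
  refine ⟨(x - a) / (b - x), div_nonneg (sub_nonneg.2 ha) h.le, ?_⟩
  rw [eq_div_iff (by positivity)]
  field_simp
  ring

theorem tendsto_zero_of_sq_integrableOn_Ioi {w : ℝ → ℝ} {a : ℝ} (hw : Differentiable ℝ w)
    (hw2 : IntegrableOn (fun y => w y ^ 2) (Ioi a))
    (hw2' : IntegrableOn (fun y => deriv w y ^ 2) (Ioi a)) : Tendsto w atTop (𝓝 0) := by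
  have hderiv : ∀ y ∈ Ioi a, HasDerivAt (fun y => w y ^ 2) (2 * (w y * deriv w y)) y := fun y _ =>
    ((hw y).hasDerivAt.fun_pow 2).congr_deriv (by norm_num; ring)
  have hL2 : MemLp w 2 (volume.restrict (Ioi a)) :=
    (memLp_two_iff_integrable_sq hw.continuous.aestronglyMeasurable).2 hw2
  have hL2' : MemLp (deriv w) 2 (volume.restrict (Ioi a)) :=
    (memLp_two_iff_integrable_sq (measurable_deriv w).aestronglyMeasurable).2 hw2'
  have hint : IntegrableOn (fun y => 2 * (w y * deriv w y)) (Ioi a) :=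
    (hL2.integrable_mul hL2').const_mul 2
  have h := (tendsto_zero_of_hasDerivAt_of_integrableOn_Ioi hderiv hint hw2).sqrt
  simp only [Real.sqrt_sq_eq_abs, Real.sqrt_zero] at h
  exact (tendsto_zero_iff_abs_tendsto_zero w).2 h

theorem integral_eq_mul_integral_Ioi_of_even {f : ℝ → ℝ} (hf : Function.Even f) {r : ℝ}
    (hr : 0 < r) : ∫ x, f x = 2 * r * ∫ y in Ioi 0, f (r * y) := by
  have habs : f = fun x => f |x| := funext fun x => by
    rcases abs_choice x with h | h <;> simp only [h, hf x]
  rw [habs, integral_comp_abs, ← habs, integral_comp_mul_left_Ioi f 0 hr, mul_zero, smul_eq_mul]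
  field_simp

theorem deriv_neg_of_odd {F : Type*} [NormedAddCommGroup F] [NormedSpace ℝ F] {f : ℝ → F}
    (hf : Function.Odd f) (x : ℝ) : deriv f (-x) = deriv f x := by
  rw [← neg_neg (deriv f (-x)), ← deriv_comp_neg, funext hf, deriv.fun_neg, neg_neg]

/-! ### Picone's identity -/

/-- Twice differentiable comparison functions for a Picone argument: a `profile`, whose multiple
by a scalar is subtracted from the unknown, and a `barrier`, which controls the remainder. The
derivatives are stored as explicit functions. -/
structure ComparisonPair where
  profile : ℝ → ℝ
  profile' : ℝ → ℝ
  profile'' : ℝ → ℝ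
  barrier : ℝ → ℝ
  barrier' : ℝ → ℝ
  barrier'' : ℝ → ℝ
  hasDerivAt_profile : ∀ y, HasDerivAt profile (profile' y) y
  hasDerivAt_profile' : ∀ y, HasDerivAt profile' (profile'' y) y
  hasDerivAt_barrier : ∀ y, HasDerivAt barrier (barrier' y) y
  hasDerivAt_barrier' : ∀ y, HasDerivAt barrier' (barrier'' y) y

/-- The density of the form `∫ (w'² - P w²)` to which the linear functional `2 c ∫ Z w` has been
added. -/
noncomputable def tiltedDensity (P Z w : ℝ → ℝ) (c y : ℝ) : ℝ :=
  deriv w y ^ 2 - P y * w y ^ 2 + 2 * c * (Z y * w y)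

namespace ComparisonPair

variable (K : ComparisonPair) {P Z w : ℝ → ℝ} {c y a b : ℝ} {s : Set ℝ}

/-- The Picone flux `(u' / u) (w - c g)² + 2 c (w - c g) g' + c² g g'` of a function `w`, for the
profile `g` and the barrier `u`. -/
noncomputable def flux (w : ℝ → ℝ) (c y : ℝ) : ℝ :=
  K.barrier' y / K.barrier y * (w y - c * K.profile y) ^ 2
    + 2 * c * (w y - c * K.profile y) * K.profile' y + c ^ 2 * (K.profile y * K.profile' y)

/-- The comparison inequalities on `s` for the potential `P` and the source `Z`: the quotient
`(Z - g'') / g` lies between `P` and `-u'' / u`. -/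
structure IsAdmissible (P Z : ℝ → ℝ) (s : Set ℝ) : Prop where
  barrier_pos : ∀ y ∈ s, 0 < K.barrier y
  profile_pos : ∀ y ∈ interior s, 0 < K.profile y
  le_source : ∀ y ∈ interior s, P y * K.profile y ≤ Z y - K.profile'' y
  source_le : ∀ y ∈ interior s,
    (Z y - K.profile'' y) * K.barrier y ≤ -K.barrier'' y * K.profile y

theorem continuous_profile : Continuous K.profile :=
  continuous_iff_continuousAt.2 fun y => (K.hasDerivAt_profile y).continuousAt

variable {K}

theorem IsAdmissible.mono {t : Set ℝ} (h : K.IsAdmissible P Z t) (hst : s ⊆ t) :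
    K.IsAdmissible P Z s where
  barrier_pos y hy := h.barrier_pos y (hst hy)
  profile_pos y hy := h.profile_pos y (interior_mono hst hy)
  le_source y hy := h.le_source y (interior_mono hst hy)
  source_le y hy := h.source_le y (interior_mono hst hy)

theorem flux_of_eq_mul_profile (h : w y = c * K.profile y) :
    K.flux w c y = c ^ 2 * (K.profile y * K.profile' y) := by
  rw [flux, h]
  ring

theorem continuousOn_flux (hw : Continuous w) (hu : ∀ y ∈ s, 0 < K.barrier y) :
    ContinuousOn (K.flux w c) s := by
  have hg := K.continuous_profile
  have hg' : Continuous K.profile' :=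
    continuous_iff_continuousAt.2 fun y => (K.hasDerivAt_profile' y).continuousAt
  have hb : Continuous K.barrier :=
    continuous_iff_continuousAt.2 fun y => (K.hasDerivAt_barrier y).continuousAt
  have hb' : Continuous K.barrier' :=
    continuous_iff_continuousAt.2 fun y => (K.hasDerivAt_barrier' y).continuousAt
  have hquot : ContinuousOn (fun y => K.barrier' y / K.barrier y) s :=
    hb'.continuousOn.div hb.continuousOn fun y hy => (hu y hy).ne'
  unfold flux
  fun_prop

theorem hasDerivAt_flux (hw : DifferentiableAt ℝ w y) (hu : K.barrier y ≠ 0) :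
    HasDerivAt (K.flux w c)
      ((K.barrier'' y * K.barrier y - K.barrier' y ^ 2) / K.barrier y ^ 2
          * (w y - c * K.profile y) ^ 2
        + 2 * (K.barrier' y / K.barrier y) * (w y - c * K.profile y)
          * (deriv w y - c * K.profile' y)
        + 2 * c * ((deriv w y - c * K.profile' y) * K.profile' y
          + (w y - c * K.profile y) * K.profile'' y)
        + c ^ 2 * (K.profile' y ^ 2 + K.profile y * K.profile'' y)) y := by
  have hg := K.hasDerivAt_profile y
  have hg' := K.hasDerivAt_profile' y
  have hv := hw.hasDerivAt.fun_sub (hg.const_mul c)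
  have hquot := (K.hasDerivAt_barrier' y).fun_div (K.hasDerivAt_barrier y) hu
  refine (((hquot.fun_mul (hv.fun_pow 2)).fun_add ((hv.const_mul (2 * c)).fun_mul hg')).fun_add
    ((hg.fun_mul hg').const_mul (c ^ 2))).congr_deriv ?_
  norm_num
  ring

/-- The difference of the two sides is a square plus the two comparison gaps, weighted by
`(w - c g)²` and `w²`. -/
theorem IsAdmissible.deriv_flux_le (h : K.IsAdmissible P Z s) (hw : DifferentiableAt ℝ w y)
    (hy : y ∈ interior s) :
    deriv (K.flux w c) y ≤ tiltedDensity P Z w c y - c ^ 2 * (Z y * K.profile y) := by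
  have hg := h.profile_pos y hy
  have hu := h.barrier_pos y (interior_subset hy)
  rw [(hasDerivAt_flux hw hu.ne').deriv, tiltedDensity]
  obtain ⟨Q, hQ'⟩ : ∃ Q, Q = (Z y - K.profile'' y) / K.profile y := ⟨_, rfl⟩
  have hZ : Z y = Q * K.profile y + K.profile'' y := by
    rw [hQ', div_mul_cancel₀ _ hg.ne']; ring
  have hPQ : P y ≤ Q := by rw [hQ', le_div_iff₀ hg]; exact h.le_source y hy
  have hQu : 0 ≤ -K.barrier'' y / K.barrier y - Q := by
    rw [hQ', sub_nonneg, div_le_div_iff₀ hg hu]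
    exact h.source_le y hy
  have hsq := sq_nonneg
    (deriv w y - c * K.profile' y - K.barrier' y / K.barrier y * (w y - c * K.profile y))
  have hbarrier := mul_nonneg hQu (sq_nonneg (w y - c * K.profile y))
  have hpotential := mul_nonneg (sub_nonneg.2 hPQ) (sq_nonneg (w y))
  have hquot : (K.barrier'' y * K.barrier y - K.barrier' y ^ 2) / K.barrier y ^ 2
      = -(-K.barrier'' y / K.barrier y) - (K.barrier' y / K.barrier y) ^ 2 := by
    field_simp
  rw [hZ, hquot]
  linear_combination hsq + hbarrier + hpotential

theorem IsAdmissible.flux_sub_flux_le (h : K.IsAdmissible P Z (Icc a b)) (hab : a ≤ b)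
    (hw : Differentiable ℝ w) (hZ : Continuous Z)
    (hI : IntegrableOn (tiltedDensity P Z w c) (Icc a b)) :
    K.flux w c b - K.flux w c a + c ^ 2 * (∫ y in a..b, Z y * K.profile y)
      ≤ ∫ y in a..b, tiltedDensity P Z w c y := by
  have hZg : Continuous fun y => c ^ 2 * (Z y * K.profile y) := by
    have := K.continuous_profile
    fun_prop
  have hflux := intervalIntegral.sub_le_integral_of_hasDeriv_right_of_le hab
    (continuousOn_flux hw.continuous h.barrier_pos)
    (fun y hy => (hasDerivAt_flux hw.differentiableAt
      (h.barrier_pos y (Ioo_subset_Icc_self hy)).ne').differentiableAt.hasDerivAt.hasDerivWithinAt)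
    (hI.sub (hZg.continuousOn.integrableOn_compact isCompact_Icc))
    (fun y hy => h.deriv_flux_le hw.differentiableAt (interior_Icc (a := a) (b := b) ▸ hy))
  simp only [Pi.sub_apply] at hflux
  rw [intervalIntegral.integral_sub ((intervalIntegrable_iff_integrableOn_Icc_of_le hab).2 hI)
    (hZg.intervalIntegrable a b), intervalIntegral.integral_const_mul] at hflux
  linarith

end ComparisonPair

/-! ### The rescaled potential and mode -/

/-- The potential `Vpot` after rescaling the line by `√2`: `2 * Vpot (√2 * y)`. -/
noncomputable def rescaledPotential (y : ℝ) : ℝ :=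
  sech (y / 8) ^ 2 / 128 + 24 * Real.sinh (y / 4) * Real.tanh y * sech y ^ 2

/-- The weighted internal mode `Z1`, without its normalizing constant, after rescaling the line
by `√2`. -/
noncomputable def rescaledMode (y : ℝ) : ℝ := Real.tanh y * sech y * Real.cosh (y / 8)

theorem Vpot_sqrt_two_mul (y : ℝ) : Vpot (√2 * y) = rescaledPotential y / 2 := by
  have h8 : √2 * y / (8 * √2) = y / 8 := by field_simp
  have h1 : √2 * y / √2 = y := by field_simp
  have hs : Real.sinh (y / 4) = 2 * Real.sinh (y / 8) * Real.cosh (y / 8) := by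
    rw [← Real.sinh_two_mul]; ring_nf
  have := (Real.cosh_pos (y / 8)).ne'
  rw [Vpot, rescaledPotential, h8, h1, hs, Real.tanh_eq_sinh_div_cosh (y / 8)]
  field_simp
  ring

theorem Z1_sqrt_two_mul (y : ℝ) :
    Z1 (√2 * y) = (2 : ℝ) ^ (-(3 : ℝ) / 4) * √3 * rescaledMode y := by
  have h8 : √2 * y / (8 * √2) = y / 8 := by field_simp
  have h1 : √2 * y / √2 = y := by field_simp
  rw [Z1, rescaledMode, h8, h1]
  ring

theorem Vpot_even : Function.Even Vpot := fun x => by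
  simp only [Vpot, neg_div, sech_neg, Real.tanh_neg, Real.cosh_neg]
  ring

theorem Z1_odd : Function.Odd Z1 := fun x => by
  simp only [Z1, neg_div, sech_neg, Real.tanh_neg, Real.cosh_neg]
  ring

theorem continuous_rescaledPotential : Continuous rescaledPotential := by
  have := continuous_sech
  have := continuous_tanh
  have := Real.continuous_sinh
  unfold rescaledPotential
  fun_prop

theorem continuous_rescaledMode : Continuous rescaledMode := by
  have := continuous_sech
  have := continuous_tanh
  have := Real.continuous_cosh
  unfold rescaledMode
  fun_prop

theorem rescaledPotential_nonneg {y : ℝ} (hy : 0 ≤ y) : 0 ≤ rescaledPotential y := by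
  have h1 := tanh_nonneg_of_nonneg hy
  have : 0 ≤ Real.sinh (y / 4) := Real.sinh_nonneg_iff.2 (by linarith)
  unfold rescaledPotential
  positivity

theorem rescaledMode_nonneg {y : ℝ} (hy : 0 ≤ y) : 0 ≤ rescaledMode y :=
  mul_nonneg (mul_nonneg (tanh_nonneg_of_nonneg hy) (sech_pos y).le) (Real.cosh_pos _).le

theorem tanh_mul_sech_le_rescaledMode {y : ℝ} (hy : 0 ≤ y) :
    Real.tanh y * sech y ≤ rescaledMode y :=
  le_mul_of_one_le_right (mul_nonneg (tanh_nonneg_of_nonneg hy) (sech_pos y).le)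
    (Real.one_le_cosh _)

theorem rescaledPotential_le_of_exp {y s : ℝ} (hy : 0 ≤ y) (hs : s = Real.exp (-y / 4)) :
    rescaledPotential y ≤ s / 32 + 48 * s ^ 7 * (1 - s ^ 2) := by
  have : 0 < s := hs ▸ Real.exp_pos _
  have : 0 ≤ Real.sinh (y / 4) := Real.sinh_nonneg_iff.2 (by linarith)
  have hsech8 : sech (y / 8) ^ 2 ≤ 4 * s := by
    have h : Real.exp (-(y / 8)) ^ 2 = s := by
      rw [hs, ← Real.exp_nat_mul]; congr 1; push_cast; ring
    nlinarith [sech_le_two_mul_exp_neg (y / 8), sech_pos (y / 8)]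
  have hsech : sech y ^ 2 ≤ 4 * s ^ 8 := by
    calc sech y ^ 2 ≤ (2 * s ^ 4) ^ 2 := by
          rw [hs]
          exact pow_le_pow_left₀ (sech_pos y).le (sech_le_two_mul_exp_neg_div_four_pow y) 2
      _ = 4 * s ^ 8 := by ring
  have hsinh : Real.sinh (y / 4) * s = (1 - s ^ 2) / 2 := by
    rw [Real.sinh_eq, ← neg_div, ← hs]
    linear_combination (hs ▸ exp_div_four_mul_exp_neg y : Real.exp (y / 4) * s = 1) / 2
  calc rescaledPotential y
      ≤ 4 * s / 128 + 24 * Real.sinh (y / 4) * 1 * (4 * s ^ 8) := by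
        unfold rescaledPotential
        gcongr
        exact (Real.tanh_lt_one y).le
    _ = s / 32 + 48 * s ^ 7 * (1 - s ^ 2) := by linear_combination 96 * s ^ 7 * hsinh

theorem rescaledMode_le_of_exp {y s : ℝ} (hs : s = Real.exp (-y / 4)) :
    rescaledMode y ≤ s ^ 3 * (1 + 6 * s + s ^ 2) / 4 := by
  have hcosh : Real.cosh (y / 8) ≤ (3 + (Real.exp (y / 4) + s) / 2) / 4 := by
    convert cosh_half_le (y / 4) using 2
    · ring
    · rw [Real.cosh_eq, hs, neg_div]
  calc rescaledMode y
      ≤ 1 * (2 * s ^ 4) * ((3 + (Real.exp (y / 4) + s) / 2) / 4) := by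
        unfold rescaledMode
        gcongr
        · exact (sech_pos y).le
        · exact (Real.tanh_lt_one y).le
        · exact hs ▸ sech_le_two_mul_exp_neg_div_four_pow y
    _ = s ^ 3 * (1 + 6 * s + s ^ 2) / 4 := by
        linear_combination
          s ^ 3 / 4 * (hs ▸ exp_div_four_mul_exp_neg y : Real.exp (y / 4) * s = 1)

theorem le_rescaledMode_of_exp {y s : ℝ} (hy : 0 ≤ y) (hs : s = Real.exp (-y / 4))
    (hs' : s ≤ 2 / 3) :
    16 / 9 * s ^ 4 ≤ rescaledMode y := by
  have hs0 : 0 < s := hs ▸ Real.exp_pos _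
  have hs8 : s ^ 8 ≤ (2 / 3) ^ 8 := pow_le_pow_left₀ hs0.le hs' 8
  refine le_trans ?_ (tanh_mul_sech_le_rescaledMode hy)
  rw [tanh_mul_sech_eq_of_exp hs, le_div_iff₀ (by positivity)]
  have hratio : 16 / 9 * (1 + s ^ 8) ^ 2 ≤ 2 * (1 - s ^ 8) := by nlinarith [pow_pos hs0 8]
  linear_combination s ^ 4 * hratio

theorem rescaledPotential_le_of_sinh {y S : ℝ} (hy : 0 ≤ y) (hS : S = Real.sinh (y / 4)) :
    rescaledPotential y ≤ 1 / 128
      + 96 * S ^ 2 * (1 + 2 * S ^ 2) * (1 + S ^ 2 / 2) / (1 + 8 * S ^ 2 + 8 * (S ^ 2) ^ 2) ^ 3 := by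
  have : 0 ≤ S := hS ▸ Real.sinh_nonneg_iff.2 (by linarith)
  have hcosh := hS ▸ cosh_eq_one_add_sinh_quarter y
  have hsinh := hS ▸ sinh_eq_sinh_quarter_mul y
  calc rescaledPotential y
      = sech (y / 8) ^ 2 / 128 + 24 * S * (Real.sinh y / Real.cosh y ^ 2) / Real.cosh y := by
        rw [rescaledPotential, ← tanh_mul_sech_eq_sinh_div, ← hS,
          div_eq_mul_one_div _ (Real.cosh y), ← sech]
        ring
    _ = sech (y / 8) ^ 2 / 128
          + 96 * S ^ 2 * (1 + 2 * S ^ 2) * Real.cosh (y / 4) / Real.cosh y ^ 3 := by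
        rw [hsinh]
        field_simp
        ring
    _ ≤ _ := by
        rw [hcosh]
        gcongr
        · exact pow_le_one₀ (sech_pos _).le (sech_le_one _)
        · exact hS ▸ cosh_quarter_le y

theorem le_rescaledMode_of_sinh {y S : ℝ} (hy : 0 ≤ y) (hS : S = Real.sinh (y / 4)) :
    4 * (1 + 2 * S ^ 2) * S / (1 + 8 * S ^ 2 + 8 * (S ^ 2) ^ 2) ^ 2 ≤ rescaledMode y := by
  have hS0 : 0 ≤ S := hS ▸ Real.sinh_nonneg_iff.2 (by linarith)
  have hcosh := hS ▸ cosh_eq_one_add_sinh_quarter y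
  have hsinh := hS ▸ sinh_eq_sinh_quarter_mul y
  refine le_trans ?_ (tanh_mul_sech_le_rescaledMode hy)
  rw [tanh_mul_sech_eq_sinh_div, ← hcosh, hsinh]
  refine div_le_div_of_nonneg_right ?_ (by positivity)
  have := mul_le_mul_of_nonneg_left (Real.one_le_cosh (y / 4))
    (by positivity : 0 ≤ 4 * S * (1 + 2 * S ^ 2))
  linarith

theorem rescaledMode_le_of_sinh {y S : ℝ} (hy : 0 ≤ y) (hS : S = Real.sinh (y / 4)) :
    rescaledMode y ≤ 4 * (1 + 2 * S ^ 2) * (1 + S ^ 2 / 2) * (1 + S ^ 2 / 8) * S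
      / (1 + 8 * S ^ 2 + 8 * (S ^ 2) ^ 2) ^ 2 := by
  have hS0 : 0 ≤ S := hS ▸ Real.sinh_nonneg_iff.2 (by linarith)
  have hcosh := hS ▸ cosh_eq_one_add_sinh_quarter y
  have hsinh := hS ▸ sinh_eq_sinh_quarter_mul y
  calc rescaledMode y
      = 4 * S * (1 + 2 * S ^ 2) * Real.cosh (y / 4) * Real.cosh (y / 8) / Real.cosh y ^ 2 := by
        rw [rescaledMode, tanh_mul_sech_eq_sinh_div, hsinh]
        ring
    _ ≤ 4 * S * (1 + 2 * S ^ 2) * (1 + S ^ 2 / 2) * (1 + S ^ 2 / 8) / Real.cosh y ^ 2 := by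
        gcongr
        · exact hS ▸ cosh_quarter_le y
        · exact hS ▸ cosh_eighth_le y
    _ = _ := by
        rw [hcosh]
        ring

/-! ### The inner comparison pair -/

/-- The potential enlarged by one percent: the surplus is what remains of `∫ w'²` once the form
for the enlarged potential is known to be nonnegative. -/
noncomputable def amplifiedPotential (y : ℝ) : ℝ := 101 / 100 * rescaledPotential y

/-- The point at which the two comparison pairs are glued; there `exp (-y / 4) = 2 / 3`. -/
noncomputable def gluingPoint : ℝ := 4 * Real.log (3 / 2)

theorem gluingPoint_pos : 0 < gluingPoint := mul_pos four_pos (Real.log_pos (by norm_num))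

theorem gluingPoint_le : gluingPoint ≤ 5 / 3 := by
  have h : Real.log (3 / 2) ≤ 5 / 12 := by
    rw [Real.log_le_iff_le_exp (by norm_num)]
    have := Real.quadratic_le_exp_of_nonneg (show (0 : ℝ) ≤ 5 / 12 by norm_num)
    norm_num at this ⊢
    linarith
  unfold gluingPoint
  linarith

theorem exp_neg_gluingPoint_div_four : Real.exp (-gluingPoint / 4) = 2 / 3 := by
  rw [gluingPoint, ← mul_neg, mul_div_cancel_left₀ _ four_ne_zero, ← Real.log_inv,
    Real.exp_log (by norm_num)]
  norm_num

theorem exp_gluingPoint_div_four : Real.exp (gluingPoint / 4) = 3 / 2 := by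
  rw [gluingPoint, mul_div_cancel_left₀ _ four_ne_zero, Real.exp_log (by norm_num)]

theorem sinh_gluingPoint_div_four : Real.sinh (gluingPoint / 4) = 5 / 12 := by
  rw [Real.sinh_eq, ← neg_div, exp_neg_gluingPoint_div_four, exp_gluingPoint_div_four]
  norm_num

theorem cosh_gluingPoint_div_four : Real.cosh (gluingPoint / 4) = 13 / 12 := by
  rw [Real.cosh_eq, ← neg_div, exp_neg_gluingPoint_div_four, exp_gluingPoint_div_four]
  norm_num

theorem sech_gluingPoint : sech gluingPoint = 2592 / 6817 := by
  rw [sech, cosh_eq_one_add_sinh_quarter, sinh_gluingPoint_div_four]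
  norm_num

/-- The comparison pair on `[0, gluingPoint]`. The profile is a cubic in `sinh (y / 4)`, so that
both comparison inequalities become polynomial in `sinh (y / 4) ^ 2`; the barrier is a cosine that
is positive on the whole interval. -/
noncomputable def innerPair : ComparisonPair where
  profile y := 186 / 125 * Real.sinh (y / 4) - 1728 / 625 * Real.sinh (y / 4) ^ 3
  profile' y := (186 / 125 - 5184 / 625 * Real.sinh (y / 4) ^ 2) * Real.cosh (y / 4) / 4
  profile'' y :=
    Real.sinh (y / 4) * (-9438 / 625 - 15552 / 625 * Real.sinh (y / 4) ^ 2) / 16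
  barrier y := Real.cos (11 / 6 * (y - gluingPoint / 2))
  barrier' y := -(11 / 6) * Real.sin (11 / 6 * (y - gluingPoint / 2))
  barrier'' y := -(121 / 36) * Real.cos (11 / 6 * (y - gluingPoint / 2))
  hasDerivAt_profile y := by
    have h := ((hasDerivAt_id' y).div_const 4).sinh
    refine ((h.const_mul _).fun_sub ((h.fun_pow 3).const_mul _)).congr_deriv ?_
    norm_num
    ring
  hasDerivAt_profile' y := by
    have hs := ((hasDerivAt_id' y).div_const 4).sinh
    have hc := ((hasDerivAt_id' y).div_const 4).cosh
    refine (((((hs.fun_pow 2).const_mul _).const_sub _).fun_mul hc).div_const 4).congr_deriv ?_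
    norm_num
    linear_combination -(648 / 625) * Real.sinh (y / 4) * Real.cosh_sq (y / 4)
  hasDerivAt_barrier y := by
    refine (((hasDerivAt_id' y).sub_const _).const_mul (11 / 6)).cos.congr_deriv ?_
    ring
  hasDerivAt_barrier' y := by
    refine (((((hasDerivAt_id' y).sub_const _).const_mul (11 / 6)).sin).const_mul _).congr_deriv ?_
    ring

theorem innerPair_le_source_rational {U : ℝ} (h0 : 0 ≤ U) (h1 : U < 25 / 144) :
    101 / 100 * (1 / 128
        + 96 * U * (1 + 2 * U) * (1 + U / 2) / (1 + 8 * U + 8 * U ^ 2) ^ 3)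
          * (186 / 125 - 1728 / 625 * U)
      + (-9438 / 625 - 15552 / 625 * U) / 16 ≤
    4 * (1 + 2 * U) / (1 + 8 * U + 8 * U ^ 2) ^ 2 := by
  have h : 101 / 100 * (1 / 128 * (1 + 8 * U + 8 * U ^ 2) ^ 3
        + 96 * U * (1 + 2 * U) * (1 + U / 2)) * (186 / 125 - 1728 / 625 * U)
      + (1 + 8 * U + 8 * U ^ 2) ^ 3 * ((-9438 / 625 - 15552 / 625 * U) / 16) ≤
      4 * (1 + 2 * U) * (1 + 8 * U + 8 * U ^ 2) := by
    obtain ⟨t, ht, rfl⟩ := exists_nonneg_eq_add_mul_div h0 h1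
    rw [← sub_nonneg]
    field_simp
    ring_nf
    positivity
  have : 0 < 1 + 8 * U + 8 * U ^ 2 := by positivity
  rw [show 4 * (1 + 2 * U) / (1 + 8 * U + 8 * U ^ 2) ^ 2
      = 4 * (1 + 2 * U) * (1 + 8 * U + 8 * U ^ 2) / (1 + 8 * U + 8 * U ^ 2) ^ 3 by field_simp,
    le_div_iff₀ (by positivity)]
  refine le_of_eq_of_le ?_ h
  field_simp

theorem innerPair_source_le_rational {U : ℝ} (h0 : 0 ≤ U) (h1 : U < 25 / 144) :
    4 * (1 + 2 * U) * (1 + U / 2) * (1 + U / 8) / (1 + 8 * U + 8 * U ^ 2) ^ 2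
        - (-9438 / 625 - 15552 / 625 * U) / 16 ≤
      121 / 36 * (186 / 125 - 1728 / 625 * U) := by
  rw [sub_le_iff_le_add, div_le_iff₀ (by positivity)]
  obtain ⟨t, ht, rfl⟩ := exists_nonneg_eq_add_mul_div h0 h1
  rw [← sub_nonneg]
  field_simp
  ring_nf
  positivity

theorem innerPair_barrier_pos {y : ℝ} (hy : y ∈ Icc 0 gluingPoint) : 0 < innerPair.barrier y := by
  have hpi := Real.pi_gt_d2
  have hp := gluingPoint_le
  apply Real.cos_pos_of_mem_Ioo
  constructor <;> linarith [hy.1, hy.2]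

theorem sinh_quarter_sq_lt {y : ℝ} (hy0 : 0 ≤ y) (hy : y < gluingPoint) :
    Real.sinh (y / 4) ^ 2 < 25 / 144 := by
  have h0 : 0 ≤ Real.sinh (y / 4) := Real.sinh_nonneg_iff.2 (by linarith)
  have h1 : Real.sinh (y / 4) < 5 / 12 := by
    rw [← sinh_gluingPoint_div_four, Real.sinh_lt_sinh]
    linarith
  nlinarith

theorem innerPair_isAdmissible :
    innerPair.IsAdmissible amplifiedPotential rescaledMode (Icc 0 gluingPoint) where
  barrier_pos _ hy := innerPair_barrier_pos hy
  profile_pos y hy := by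
    rw [interior_Icc] at hy
    have hS : 0 < Real.sinh (y / 4) := Real.sinh_pos_iff.2 (by linarith [hy.1])
    have hU := sinh_quarter_sq_lt hy.1.le hy.2
    have := mul_pos hS (by linarith : 0 < 186 / 125 - 1728 / 625 * Real.sinh (y / 4) ^ 2)
    simp only [innerPair]
    linarith
  le_source y hy := by
    rw [interior_Icc] at hy
    obtain ⟨S, hS⟩ : ∃ S, S = Real.sinh (y / 4) := ⟨_, rfl⟩
    have hS0 : 0 < S := hS ▸ Real.sinh_pos_iff.2 (by linarith [hy.1])
    have hU : S ^ 2 < 25 / 144 := hS ▸ sinh_quarter_sq_lt hy.1.le hy.2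
    have hf : 0 < S * (186 / 125 - 1728 / 625 * S ^ 2) := mul_pos hS0 (by linarith)
    have hP := mul_le_mul_of_nonneg_right (rescaledPotential_le_of_sinh hy.1.le hS) hf.le
    have hZ := le_rescaledMode_of_sinh hy.1.le hS
    simp only [innerPair, amplifiedPotential, ← hS]
    linear_combination 101 / 100 * hP + hZ + S * innerPair_le_source_rational (sq_nonneg S) hU
  source_le y hy := by
    rw [interior_Icc] at hy
    obtain ⟨S, hS⟩ : ∃ S, S = Real.sinh (y / 4) := ⟨_, rfl⟩
    have hS0 : 0 < S := hS ▸ Real.sinh_pos_iff.2 (by linarith [hy.1])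
    have hU : S ^ 2 < 25 / 144 := hS ▸ sinh_quarter_sq_lt hy.1.le hy.2
    have hbarrier := innerPair_barrier_pos (Ioo_subset_Icc_self hy)
    have hZ := rescaledMode_le_of_sinh hy.1.le hS
    have hgap : rescaledMode y - innerPair.profile'' y ≤ 121 / 36 * innerPair.profile y := by
      simp only [innerPair, ← hS]
      linear_combination hZ + S * innerPair_source_le_rational (sq_nonneg S) hU
    calc (rescaledMode y - innerPair.profile'' y) * innerPair.barrier y
        ≤ 121 / 36 * innerPair.profile y * innerPair.barrier y :=
          mul_le_mul_of_nonneg_right hgap hbarrier.le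
      _ = -innerPair.barrier'' y * innerPair.profile y := by
          simp only [innerPair]
          ring

/-! ### The outer comparison pair -/

/-- The exponential `exp (-(y - gluingPoint) / 4)`, the variable in which the outer comparison
pair is polynomial. -/
noncomputable def outerDecay (y : ℝ) : ℝ := 3 / 2 * Real.exp (-y / 4)

theorem exp_neg_div_four_eq (y : ℝ) : 2 / 3 * outerDecay y = Real.exp (-y / 4) := by
  rw [outerDecay]
  ring

theorem outerDecay_pos (y : ℝ) : 0 < outerDecay y := by
  unfold outerDecay
  positivity

theorem outerDecay_gluingPoint : outerDecay gluingPoint = 1 := by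
  rw [outerDecay, exp_neg_gluingPoint_div_four]
  norm_num

theorem outerDecay_strictAnti : StrictAnti outerDecay := fun x y h =>
  mul_lt_mul_of_pos_left (Real.exp_lt_exp.2 (by linarith)) (by norm_num)

theorem outerDecay_lt_one {y : ℝ} (hy : gluingPoint < y) : outerDecay y < 1 :=
  outerDecay_gluingPoint ▸ outerDecay_strictAnti hy

theorem outerDecay_le_one {y : ℝ} (hy : gluingPoint ≤ y) : outerDecay y ≤ 1 :=
  outerDecay_gluingPoint ▸ outerDecay_strictAnti.antitone hy

theorem hasDerivAt_outerDecay (y : ℝ) : HasDerivAt outerDecay (-outerDecay y / 4) y := by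
  refine ((((hasDerivAt_id' y).fun_neg.div_const 4).exp).const_mul (3 / 2)).congr_deriv ?_
  rw [outerDecay]
  ring

theorem tendsto_outerDecay : Tendsto outerDecay atTop (𝓝 0) := by
  have h : Tendsto (fun y : ℝ => -y / 4) atTop atBot :=
    tendsto_neg_atTop_atBot.atBot_div_const four_pos
  unfold outerDecay
  simpa using (Real.tendsto_exp_atBot.comp h).const_mul (3 / 2)

/-- The comparison pair on `[gluingPoint, ∞)`, polynomial in `outerDecay`. The profile takes the
same value at `gluingPoint` as that of `innerPair`, and its slope there makes the gluing jump
smaller than what the source contributes. -/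
noncomputable def outerPair : ComparisonPair where
  profile y := 21 / 50 * (2 - outerDecay y + 17 / 20 * (outerDecay y ^ 3 - outerDecay y ^ 6))
  profile' y :=
    21 / 200 * (outerDecay y - 51 / 20 * outerDecay y ^ 3 + 51 / 10 * outerDecay y ^ 6)
  profile'' y :=
    21 / 800 * (-outerDecay y + 153 / 20 * outerDecay y ^ 3 - 153 / 5 * outerDecay y ^ 6)
  barrier y := 1 - 27 / 50 * outerDecay y - 9 / 20 * outerDecay y ^ 5
  barrier' y := 27 / 200 * outerDecay y + 9 / 16 * outerDecay y ^ 5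
  barrier'' y := -(27 / 800 * outerDecay y + 45 / 64 * outerDecay y ^ 5)
  hasDerivAt_profile y := by
    have h := hasDerivAt_outerDecay y
    refine (((h.const_sub 2).fun_add (((h.fun_pow 3).fun_sub (h.fun_pow 6)).const_mul
      (17 / 20))).const_mul (21 / 50)).congr_deriv ?_
    norm_num
    ring
  hasDerivAt_profile' y := by
    have h := hasDerivAt_outerDecay y
    refine (((h.fun_sub ((h.fun_pow 3).const_mul (51 / 20))).fun_add
      ((h.fun_pow 6).const_mul (51 / 10))).const_mul (21 / 200)).congr_deriv ?_
    norm_num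
    ring
  hasDerivAt_barrier y := by
    have h := hasDerivAt_outerDecay y
    refine (((h.const_mul (27 / 50)).const_sub 1).fun_sub
      ((h.fun_pow 5).const_mul (9 / 20))).congr_deriv ?_
    norm_num
    ring
  hasDerivAt_barrier' y := by
    have h := hasDerivAt_outerDecay y
    refine ((h.const_mul (27 / 200)).fun_add ((h.fun_pow 5).const_mul (9 / 16))).congr_deriv ?_
    norm_num
    ring

theorem outerPair_le_source_polynomial {q : ℝ} (h0 : 0 ≤ q) (h1 : q < 1) :
    101 / 100 * (2 / 3 * q / 32 + 48 * (2 / 3 * q) ^ 7 * (1 - (2 / 3 * q) ^ 2)) *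
        (21 / 50 * (2 - q + 17 / 20 * (q ^ 3 - q ^ 6)))
      + 21 / 800 * (-q + 153 / 20 * q ^ 3 - 153 / 5 * q ^ 6) ≤ 16 / 9 * (2 / 3 * q) ^ 4 := by
  suffices 0 ≤ 16 / 9 * (2 / 3) ^ 4 * q ^ 3
      - 101 / 100 * (1 / 48 + 48 * (2 / 3) ^ 7 * q ^ 6 * (1 - (2 / 3 * q) ^ 2))
        * (21 / 50 * (2 - q + 17 / 20 * (q ^ 3 - q ^ 6)))
      - 21 / 800 * (-1 + 153 / 20 * q ^ 2 - 153 / 5 * q ^ 5) by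
    linear_combination q * this
  obtain hq | hq := lt_or_ge q (1 / 2)
  · obtain ⟨t, ht, rfl⟩ := exists_nonneg_eq_add_mul_div h0 hq
    field_simp
    ring_nf
    positivity
  · obtain ⟨t, ht, rfl⟩ := exists_nonneg_eq_add_mul_div hq h1
    field_simp
    ring_nf
    positivity

theorem outerPair_source_le_polynomial {q : ℝ} (h0 : 0 ≤ q) (h1 : q < 1) :
    ((2 / 3 * q) ^ 3 * (1 + 6 * (2 / 3 * q) + (2 / 3 * q) ^ 2) / 4
        - 21 / 800 * (-q + 153 / 20 * q ^ 3 - 153 / 5 * q ^ 6))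
          * (1 - 27 / 50 * q - 9 / 20 * q ^ 5) ≤
      (27 / 800 * q + 45 / 64 * q ^ 5) * (21 / 50 * (2 - q + 17 / 20 * (q ^ 3 - q ^ 6))) := by
  suffices 0 ≤ (27 / 800 + 45 / 64 * q ^ 4) * (21 / 50 * (2 - q + 17 / 20 * (q ^ 3 - q ^ 6)))
      - ((2 / 3) ^ 3 * q ^ 2 * (1 + 6 * (2 / 3 * q) + (2 / 3 * q) ^ 2) / 4
        - 21 / 800 * (-1 + 153 / 20 * q ^ 2 - 153 / 5 * q ^ 5))
          * (1 - 27 / 50 * q - 9 / 20 * q ^ 5) by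
    linear_combination q * this
  obtain hq | hq := lt_or_ge q (1 / 2)
  · obtain ⟨t, ht, rfl⟩ := exists_nonneg_eq_add_mul_div h0 hq
    field_simp
    ring_nf
    positivity
  · obtain ⟨t, ht, rfl⟩ := exists_nonneg_eq_add_mul_div hq h1
    field_simp
    ring_nf
    positivity

theorem le_outerPair_profile {y : ℝ} (hy : gluingPoint ≤ y) : 21 / 50 ≤ outerPair.profile y := by
  have h0 := outerDecay_pos y
  have h1 := outerDecay_le_one hy
  have h36 := pow_le_pow_of_le_one h0.le h1 (show 3 ≤ 6 by norm_num)
  simp only [outerPair]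
  linarith

theorem outerPair_isAdmissible :
    outerPair.IsAdmissible amplifiedPotential rescaledMode (Ici gluingPoint) where
  barrier_pos y hy := by
    have h1 := outerDecay_le_one hy
    have h5 := pow_le_one₀ (n := 5) (outerDecay_pos y).le h1
    simp only [outerPair]
    linarith
  profile_pos y hy := by linarith [le_outerPair_profile (interior_subset hy)]
  le_source y hy := by
    rw [interior_Ici] at hy
    have hy0 : 0 ≤ y := gluingPoint_pos.le.trans hy.le
    have hs := exp_neg_div_four_eq y
    have h1 := outerDecay_lt_one hy
    have hP := mul_le_mul_of_nonneg_right (rescaledPotential_le_of_exp hy0 hs)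
      ((by norm_num : (0 : ℝ) ≤ 21 / 50).trans (le_outerPair_profile hy.le))
    have hZ := le_rescaledMode_of_exp hy0 hs (by linarith)
    simp only [outerPair, amplifiedPotential] at hP ⊢
    linear_combination 101 / 100 * hP + hZ + outerPair_le_source_polynomial (outerDecay_pos y).le h1
  source_le y hy := by
    rw [interior_Ici] at hy
    have h0 := outerDecay_pos y
    have h1 := outerDecay_lt_one hy
    have h5 := pow_le_one₀ (n := 5) h0.le h1.le
    have hu : 0 ≤ 1 - 27 / 50 * outerDecay y - 9 / 20 * outerDecay y ^ 5 := by linarith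
    have hZ := mul_le_mul_of_nonneg_right (rescaledMode_le_of_exp (exp_neg_div_four_eq y)) hu
    simp only [outerPair]
    linear_combination hZ + outerPair_source_le_polynomial h0.le h1

/-! ### The half-line inequality -/

section HalfLine

variable {w : ℝ → ℝ} {c : ℝ}

theorem integrableOn_rescaledPotential_mul_sq (hw2 : IntegrableOn (fun y => w y ^ 2) (Ioi 0)) :
    IntegrableOn (fun y => rescaledPotential y * w y ^ 2) (Ioi 0) := by
  refine Integrable.bdd_mul (c := 49) hw2 continuous_rescaledPotential.aestronglyMeasurable ?_
  filter_upwards [ae_restrict_mem measurableSet_Ioi] with y hy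
  have hs0 := Real.exp_pos (-y / 4)
  have hs1 : Real.exp (-y / 4) ≤ 1 := Real.exp_le_one_iff.2 (by linarith [mem_Ioi.1 hy])
  have hs7 := pow_le_one₀ (n := 7) hs0.le hs1
  have hs9 := pow_pos hs0 9
  rw [Real.norm_of_nonneg (rescaledPotential_nonneg (le_of_lt hy))]
  linarith [rescaledPotential_le_of_exp (le_of_lt hy) rfl]

theorem memLp_two_rescaledMode : MemLp rescaledMode 2 (volume.restrict (Ioi 0)) := by
  rw [memLp_two_iff_integrable_sq continuous_rescaledMode.aestronglyMeasurable]
  refine Integrable.mono' ((exp_neg_integrableOn_Ioi 0 (by norm_num : (0 : ℝ) < 1 / 2)).const_mul 4)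
    (continuous_rescaledMode.pow 2).aestronglyMeasurable ?_
  filter_upwards [ae_restrict_mem measurableSet_Ioi] with y hy
  have hs0 := Real.exp_pos (-y / 4)
  have hs1 : Real.exp (-y / 4) ≤ 1 := Real.exp_le_one_iff.2 (by linarith [mem_Ioi.1 hy])
  have hexp : Real.exp (-(1 / 2) * y) = Real.exp (-y / 4) ^ 2 := by
    rw [← Real.exp_nat_mul]; congr 1; push_cast; ring
  have hZ : rescaledMode y ≤ 2 * Real.exp (-y / 4) := by
    refine (rescaledMode_le_of_exp rfl).trans ?_
    have h2 := pow_le_one₀ (n := 2) hs0.le hs1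
    calc _ ≤ Real.exp (-y / 4) * 1 * (1 + 6 * 1 + 1) / 4 := by
          rw [pow_succ' _ 2]
          gcongr
      _ = 2 * Real.exp (-y / 4) := by ring
  rw [Real.norm_of_nonneg (sq_nonneg _), hexp]
  nlinarith [rescaledMode_nonneg (le_of_lt hy)]

theorem integrableOn_rescaledMode_mul (hw : Continuous w)
    (hw2 : IntegrableOn (fun y => w y ^ 2) (Ioi 0)) :
    IntegrableOn (fun y => rescaledMode y * w y) (Ioi 0) :=
  memLp_two_rescaledMode.integrable_mul
    ((memLp_two_iff_integrable_sq hw.aestronglyMeasurable).2 hw2)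

theorem sq_mul_le_integral_tiltedDensity_inner (hw : Differentiable ℝ w) (h0 : w 0 = 0)
    (hc : w gluingPoint = c * (21 / 50))
    (hI : IntegrableOn (tiltedDensity amplifiedPotential rescaledMode w c) (Icc 0 gluingPoint)) :
    c ^ 2 * (21 / 50 * (13 / 1000))
      ≤ ∫ y in 0..gluingPoint, tiltedDensity amplifiedPotential rescaledMode w c y := by
  have hp := gluingPoint_pos.le
  have hsource : 0 ≤ ∫ y in 0..gluingPoint, rescaledMode y * innerPair.profile y := by
    rw [intervalIntegral.integral_of_le hp, integral_Ioc_eq_integral_Ioo]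
    exact setIntegral_nonneg measurableSet_Ioo fun y hy => mul_nonneg (rescaledMode_nonneg hy.1.le)
      (innerPair_isAdmissible.profile_pos y (interior_Icc (a := (0 : ℝ)) ▸ hy)).le
  have hflux := innerPair_isAdmissible.flux_sub_flux_le hp hw continuous_rescaledMode hI
  have hgp : innerPair.profile gluingPoint = 21 / 50 := by
    simp only [innerPair, sinh_gluingPoint_div_four]
    norm_num
  have hg0 : innerPair.profile 0 = 0 := by simp [innerPair]
  have hg'p : innerPair.profile' gluingPoint = 13 / 1000 := by
    simp only [innerPair, sinh_gluingPoint_div_four, cosh_gluingPoint_div_four]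
    norm_num
  rw [ComparisonPair.flux_of_eq_mul_profile (hgp ▸ hc),
    ComparisonPair.flux_of_eq_mul_profile (y := 0) (by rw [h0, hg0, mul_zero]),
    hgp, hg0, hg'p] at hflux
  linarith [mul_nonneg (sq_nonneg c) hsource]

theorem le_integral_rescaledMode_mul_outerPair {b : ℝ} (hb : gluingPoint ≤ b) :
    21 / 50 * (2592 / 6817 - sech b)
      ≤ ∫ y in gluingPoint..b, rescaledMode y * outerPair.profile y := by
  have hts : Continuous fun y => Real.tanh y * sech y := continuous_tanh.mul continuous_sech
  have hint : ∫ y in gluingPoint..b, Real.tanh y * sech y = 2592 / 6817 - sech b := by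
    rw [← sech_gluingPoint, intervalIntegral.integral_eq_sub_of_hasDerivAt (f := fun y => -sech y)
      (fun y _ => (hasDerivAt_sech y).neg.congr_deriv (neg_neg _)) (hts.intervalIntegrable _ _)]
    ring
  rw [← hint, ← intervalIntegral.integral_const_mul]
  refine intervalIntegral.integral_mono_on hb ((hts.const_mul _).intervalIntegrable _ _)
    ((continuous_rescaledMode.mul outerPair.continuous_profile).intervalIntegrable _ _) ?_
  intro y hy
  have hy0 := gluingPoint_pos.le.trans hy.1
  rw [mul_comm]
  exact mul_le_mul (tanh_mul_sech_le_rescaledMode hy0) (le_outerPair_profile hy.1) (by norm_num)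
    (rescaledMode_nonneg hy0)

theorem tendsto_flux_outerPair (hw : Tendsto w atTop (𝓝 0)) :
    Tendsto (outerPair.flux w c) atTop (𝓝 0) := by
  have hq := tendsto_outerDecay
  have hg : Tendsto outerPair.profile atTop (𝓝 (21 / 25)) := by
    have := (((hq.const_sub 2).add (((hq.pow 3).sub (hq.pow 6)).const_mul (17 / 20))).const_mul
      (21 / 50))
    norm_num at this
    exact this
  have hg' : Tendsto outerPair.profile' atTop (𝓝 0) := by
    have := ((hq.sub ((hq.pow 3).const_mul (51 / 20))).add ((hq.pow 6).const_mul
      (51 / 10))).const_mul (21 / 200)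
    norm_num at this
    exact this
  have hu : Tendsto outerPair.barrier atTop (𝓝 1) := by
    have := ((hq.const_mul (27 / 50)).const_sub 1).sub ((hq.pow 5).const_mul (9 / 20))
    norm_num at this
    exact this
  have hu' : Tendsto outerPair.barrier' atTop (𝓝 0) := by
    have := (hq.const_mul (27 / 200)).add ((hq.pow 5).const_mul (9 / 16))
    norm_num at this
    exact this
  have hv := hw.sub (hg.const_mul c)
  have hflux := (((hu'.div hu one_ne_zero).mul (hv.pow 2)).add
    ((hv.const_mul (2 * c)).mul hg')).add ((hg.mul hg').const_mul (c ^ 2))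
  norm_num at hflux
  exact hflux

theorem sq_mul_le_integral_tiltedDensity_outer (hw : Differentiable ℝ w)
    (hlim : Tendsto w atTop (𝓝 0)) (hc : w gluingPoint = c * (21 / 50))
    (hI : IntegrableOn (tiltedDensity amplifiedPotential rescaledMode w c) (Ioi gluingPoint)) :
    c ^ 2 * (21 / 50 * (2592 / 6817 - 1491 / 4000))
      ≤ ∫ y in Ioi gluingPoint, tiltedDensity amplifiedPotential rescaledMode w c y := by
  have hgp : outerPair.profile gluingPoint = 21 / 50 := by
    simp only [outerPair, outerDecay_gluingPoint]
    norm_num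
  have hg'p : outerPair.profile' gluingPoint = 1491 / 4000 := by
    simp only [outerPair, outerDecay_gluingPoint]
    norm_num
  have hfinite : ∀ b ≥ gluingPoint, outerPair.flux w c b - c ^ 2 * (21 / 50 * (1491 / 4000))
      + c ^ 2 * (21 / 50 * (2592 / 6817 - sech b))
      ≤ ∫ y in gluingPoint..b, tiltedDensity amplifiedPotential rescaledMode w c y := by
    intro b hb
    have hflux := (outerPair_isAdmissible.mono Icc_subset_Ici_self).flux_sub_flux_le hb hw
      continuous_rescaledMode
      (((integrableOn_Ici_iff_integrableOn_Ioi).2 hI).mono_set Icc_subset_Ici_self)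
    rw [ComparisonPair.flux_of_eq_mul_profile (y := gluingPoint) (hgp ▸ hc), hgp, hg'p] at hflux
    linarith [mul_le_mul_of_nonneg_left (le_integral_rescaledMode_mul_outerPair hb) (sq_nonneg c)]
  have hlower := ((tendsto_flux_outerPair (c := c) hlim).sub_const
    (c ^ 2 * (21 / 50 * (1491 / 4000)))).add
      (((tendsto_sech_atTop.const_sub (2592 / 6817)).const_mul (21 / 50)).const_mul (c ^ 2))
  have hupper := intervalIntegral_tendsto_integral_Ioi gluingPoint hI tendsto_id
  have hle := le_of_tendsto_of_tendsto hlower hupper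
    ((eventually_ge_atTop gluingPoint).mono hfinite)
  linarith

theorem half_line_coercivity (hw : Differentiable ℝ w) (h0 : w 0 = 0)
    (hw2 : IntegrableOn (fun y => w y ^ 2) (Ioi 0))
    (hw2' : IntegrableOn (fun y => deriv w y ^ 2) (Ioi 0)) :
    1 / 101 * (∫ y in Ioi 0, deriv w y ^ 2)
      ≤ (∫ y in Ioi 0, deriv w y ^ 2) - (∫ y in Ioi 0, rescaledPotential y * w y ^ 2)
        + 125 * (∫ y in Ioi 0, rescaledMode y * w y) ^ 2 := by
  obtain ⟨c, hc⟩ : ∃ c, w gluingPoint = c * (21 / 50) := ⟨w gluingPoint / (21 / 50), by ring⟩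
  have hP := (integrableOn_rescaledPotential_mul_sq hw2).const_mul (101 / 100)
  have hZ := (integrableOn_rescaledMode_mul hw.continuous hw2).const_mul (2 * c)
  have hdensity : tiltedDensity amplifiedPotential rescaledMode w c = fun y =>
      deriv w y ^ 2 - 101 / 100 * (rescaledPotential y * w y ^ 2)
        + 2 * c * (rescaledMode y * w y) := by
    funext y
    rw [tiltedDensity, amplifiedPotential, mul_assoc]
  have hI : IntegrableOn (tiltedDensity amplifiedPotential rescaledMode w c) (Ioi 0) :=
    hdensity ▸ (hw2'.sub hP).add hZ
  have hval : ∫ y in Ioi 0, tiltedDensity amplifiedPotential rescaledMode w c y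
      = (∫ y in Ioi 0, deriv w y ^ 2)
        - 101 / 100 * (∫ y in Ioi 0, rescaledPotential y * w y ^ 2)
        + 2 * c * (∫ y in Ioi 0, rescaledMode y * w y) := by
    have hdiff : Integrable (fun y => deriv w y ^ 2 - 101 / 100 * (rescaledPotential y * w y ^ 2))
        (volume.restrict (Ioi 0)) := hw2'.sub hP
    rw [hdensity, integral_add hdiff hZ, integral_sub hw2' hP, integral_const_mul,
      integral_const_mul]
  have hIouter := hI.mono_set (Ioi_subset_Ioi gluingPoint_pos.le)
  have hinner := sq_mul_le_integral_tiltedDensity_inner hw h0 hc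
    (((integrableOn_Ici_iff_integrableOn_Ioi).2 hI).mono_set Icc_subset_Ici_self)
  have houter := sq_mul_le_integral_tiltedDensity_outer hw
    (tendsto_zero_of_sq_integrableOn_Ioi hw hw2 hw2') hc hIouter
  have hsum := intervalIntegral.integral_interval_add_Ioi hI hIouter
  linarith [sq_nonneg (c - 125 * ∫ y in Ioi 0, rescaledMode y * w y), sq_nonneg c,
    sq_nonneg (∫ y in Ioi 0, rescaledMode y * w y)]

end HalfLine

/-! ### Reduction by parity -/

theorem deriv_sqrt_two_mul_sq (w : ℝ → ℝ) (y : ℝ) :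
    deriv (fun y => w (√2 * y)) y ^ 2 = 2 * deriv w (√2 * y) ^ 2 := by
  rw [deriv_comp_mul_left, smul_eq_mul, mul_pow, Real.sq_sqrt zero_le_two]

section Odd

variable {w : ℝ → ℝ}

theorem integral_deriv_sq_eq_of_odd (hodd : Function.Odd w) :
    ∫ x, deriv w x ^ 2 = √2 * ∫ y in Ioi 0, deriv (fun y => w (√2 * y)) y ^ 2 := by
  rw [integral_eq_mul_integral_Ioi_of_even (fun x => by rw [deriv_neg_of_odd hodd])
    (Real.sqrt_pos.2 two_pos)]
  simp only [deriv_sqrt_two_mul_sq, integral_const_mul]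
  ring

theorem integral_deriv_sq_sub_Vpot_mul_sq_eq_of_odd (hodd : Function.Odd w)
    (hw2 : IntegrableOn (fun y => w (√2 * y) ^ 2) (Ioi 0))
    (hw2' : IntegrableOn (fun y => deriv (fun y => w (√2 * y)) y ^ 2) (Ioi 0)) :
    ∫ x, (deriv w x ^ 2 - Vpot x * w x ^ 2)
      = √2 * ((∫ y in Ioi 0, deriv (fun y => w (√2 * y)) y ^ 2)
        - ∫ y in Ioi 0, rescaledPotential y * w (√2 * y) ^ 2) := by
  have hscale : ∀ y, deriv w (√2 * y) ^ 2 - Vpot (√2 * y) * w (√2 * y) ^ 2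
      = 1 / 2 * (deriv (fun y => w (√2 * y)) y ^ 2 - rescaledPotential y * w (√2 * y) ^ 2) := by
    intro y
    rw [deriv_sqrt_two_mul_sq, Vpot_sqrt_two_mul]
    ring
  rw [integral_eq_mul_integral_Ioi_of_even
    (fun x => by rw [deriv_neg_of_odd hodd, Vpot_even x, hodd x, neg_sq]) (Real.sqrt_pos.2 two_pos)]
  simp only [hscale]
  rw [integral_const_mul, integral_sub hw2' (integrableOn_rescaledPotential_mul_sq hw2)]
  ring

theorem sq_integral_mul_Z1_eq_of_odd (hodd : Function.Odd w) :
    (∫ x, w x * Z1 x) ^ 2 = 6 * √2 * (∫ y in Ioi 0, rescaledMode y * w (√2 * y)) ^ 2 := by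
  have hconst : (2 * √2 * ((2 : ℝ) ^ (-(3 : ℝ) / 4) * √3)) ^ 2 = 6 * √2 := by
    have hpow : ((2 : ℝ) ^ (-(3 : ℝ) / 4)) ^ 2 = √2 / 4 := by
      rw [← Real.rpow_mul_natCast zero_le_two, Real.sqrt_eq_rpow,
        show (-(3 : ℝ) / 4 * (2 : ℕ)) = 1 / 2 - 2 by norm_num, Real.rpow_sub two_pos]
      norm_num
    rw [mul_pow, mul_pow, mul_pow, hpow, Real.sq_sqrt zero_le_two, Real.sq_sqrt zero_le_three]
    ring
  have hscale : ∀ y, w (√2 * y) * Z1 (√2 * y)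
      = (2 : ℝ) ^ (-(3 : ℝ) / 4) * √3 * (rescaledMode y * w (√2 * y)) := by
    intro y
    rw [Z1_sqrt_two_mul]
    ring
  rw [integral_eq_mul_integral_Ioi_of_even (f := fun x => w x * Z1 x) (hodd.mul_odd Z1_odd)
    (Real.sqrt_pos.2 two_pos)]
  simp only [hscale, integral_const_mul]
  rw [← mul_assoc, mul_pow, hconst]

end Odd

theorem coercivity_Bsharp_with_projection :
    ∃ C > 0, ∃ κ > 0, ∀ w : ℝ → ℝ,
      (∀ x : ℝ, w (-x) = -w x) →
      Differentiable ℝ w →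
      Integrable (fun x => (w x) ^ 2) →
      Integrable (fun x => (deriv w x) ^ 2) →
      (∫ x : ℝ, ((deriv w x) ^ 2 - Vpot x * (w x) ^ 2))
          + C * (∫ x : ℝ, w x * Z1 x) ^ 2
        ≥ κ * (∫ x : ℝ, (deriv w x) ^ 2) := by
  refine ⟨125 / 6, by norm_num, 1 / 101, by norm_num, fun w hodd hw hw2 hw2' => ?_⟩
  have hr : √2 ≠ 0 := by positivity
  have hW : Differentiable ℝ fun y => w (√2 * y) := hw.comp (differentiable_id.const_mul _)
  have hW0 : w (√2 * 0) = 0 := by rw [mul_zero, Function.Odd.map_zero hodd]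
  have hW2 : IntegrableOn (fun y => w (√2 * y) ^ 2) (Ioi 0) :=
    (hw2.comp_mul_left' hr).integrableOn
  have hW2' : IntegrableOn (fun y => deriv (fun y => w (√2 * y)) y ^ 2) (Ioi 0) := by
    simp only [deriv_sqrt_two_mul_sq]
    exact ((hw2'.comp_mul_left' hr).const_mul 2).integrableOn
  rw [integral_deriv_sq_sub_Vpot_mul_sq_eq_of_odd hodd hW2 hW2', integral_deriv_sq_eq_of_odd hodd,
    sq_integral_mul_Z1_eq_of_odd hodd]
  linarith [mul_le_mul_of_nonneg_left (half_line_coercivity hW hW0 hW2 hW2') (Real.sqrt_nonneg 2)]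
end

section
/- Let V(x) = (1/256)·sech²(x/(8√2)) + 24·tanh(x/(8√2))·cosh²(x/(8√2))·tanh(x/√2)·sech²(x/√2) and Z₁(x) = 2^(-3/4)·√3·tanh(x/√2)·sech(x/√2)·cosh(x/(8√2)). There exists κ > 0 such that for every odd, bounded, differentiable function w : ℝ → ℝ with w' square integrable on ℝ and satisfying ∫_ℝ w(x)·Z₁(x) dx = 0, one has ∫_ℝ ( w'(x)² - V(x)·w(x)² ) dx ≥ κ·∫_ℝ w'(x)² dx. -/
open MeasureTheory

/-!
By parity it suffices to work on the half-line `x > 0` and, for the coercivity constant `1 / 201`,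
to show that `∫ (w'² - q V w²) ≥ 0` with `q = 201 / 200`. Let `ψ > 0` solve `ψ'' + n ψ = Z` with
`ψ 0 = 0`, where `Z` is a positive multiple of `Z₁` and `n ≥ q V`, and let `u` satisfy
`u' + u² + n ≤ 0`. With `v = w + s ψ`,

  `w'² - q V w² - 2 s w Z = (u v² - s ψ' (2 w + s ψ))' + (w' + s ψ' - u v)²`
      `- (u' + u² + n) v² + (n - q V) w² + s² Z ψ`,

and the left-hand side integrates to the quadratic form because `w ⊥ Z`. No global `u` exists, since
without the constraint the form takes negative values; but `u` may jump at a point `R`, because the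
free multiplier `s` can be chosen so that `v R = 0`, which removes `u` from the flux there.
In the variable `ρ = exp (-x / (8 √2))` everything is rational, and the inequalities on `n` and `u`
become polynomial ones.
-/

open Set Filter Topology Asymptotics Polynomial

theorem integral_eq_two_mul_integral_Ioi_of_even {f : ℝ → ℝ} (hf : f.Even) :
    ∫ x, f x = 2 * ∫ x in Ioi 0, f x := by
  have hf_abs : ∀ x, f |x| = f x := fun x ↦ by
    rcases abs_choice x with h | h <;> simp only [h, hf x]
  simpa only [hf_abs] using integral_comp_abs (f := f)

theorem even_deriv_of_odd {f : ℝ → ℝ} (hf : f.Odd) : (deriv f).Even := fun x ↦ by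
  have h := congrArg (deriv · x) (funext hf : (fun y ↦ f (-y)) = fun y ↦ -f y)
  simpa only [deriv_comp_neg, deriv.fun_neg, neg_inj] using h

/-- `u` is a supersolution on `s` of the Riccati equation `u' + u² + n = 0`, the equation satisfied
by the logarithmic derivatives of the positive solutions of `φ'' + n φ = 0`. The inequality is only
required in the interior of `s`. -/
structure IsRiccatiSupersolution (n u : ℝ → ℝ) (s : Set ℝ) : Prop where
  continuousOn : ContinuousOn u s
  exists_hasDerivAt : ∀ x ∈ interior s, ∃ u', HasDerivAt u u' x ∧ u' + u x ^ 2 + n x ≤ 0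

theorem IsRiccatiSupersolution.mono {n u : ℝ → ℝ} {s t : Set ℝ} (h : IsRiccatiSupersolution n u t)
    (hst : s ⊆ t) : IsRiccatiSupersolution n u s :=
  ⟨h.continuousOn.mono hst, fun x hx ↦ h.exists_hasDerivAt x (interior_mono hst hx)⟩

theorem isRiccatiSupersolution_div {n φ φ' φ'' : ℝ → ℝ} {s : Set ℝ}
    (hφ : ∀ x ∈ s, HasDerivAt φ (φ' x) x) (hφ' : ∀ x ∈ s, HasDerivAt φ' (φ'' x) x)
    (hpos : ∀ x ∈ s, 0 < φ x) (hle : ∀ x ∈ interior s, φ'' x + n x * φ x ≤ 0) :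
    IsRiccatiSupersolution n (fun x ↦ φ' x / φ x) s := by
  have hderiv : ∀ x ∈ s, HasDerivAt (fun x ↦ φ' x / φ x)
      ((φ'' x * φ x - φ' x * φ' x) / φ x ^ 2) x := fun x hx ↦
    (hφ' x hx).div (hφ x hx) (hpos x hx).ne'
  refine ⟨fun x hx ↦ (hderiv x hx).continuousAt.continuousWithinAt, fun x hx ↦
    ⟨_, hderiv x (interior_subset hx), ?_⟩⟩
  have hφx := hpos x (interior_subset hx)
  calc (φ'' x * φ x - φ' x * φ' x) / φ x ^ 2 + (φ' x / φ x) ^ 2 + n x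
      = (φ'' x + n x * φ x) / φ x := by field_simp; ring
    _ ≤ 0 := div_nonpos_of_nonpos_of_nonneg (hle x hx) hφx.le

/-- `ψ`, with derivative `ψ'`, solves the inhomogeneous Jacobi equation `ψ'' + n ψ = Z` on
`[0, ∞)`, vanishes at `0` and is positive on `(0, ∞)`. -/
structure IsPositiveJacobiField (n Z ψ ψ' : ℝ → ℝ) : Prop where
  hasDerivAt : ∀ x, 0 ≤ x → HasDerivAt ψ (ψ' x) x
  hasDerivAt' : ∀ x, 0 ≤ x → HasDerivAt ψ' (Z x - n x * ψ x) x
  zero : ψ 0 = 0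
  pos : ∀ x, 0 < x → 0 < ψ x

/-- The boundary term in Picone's identity for `w + s ψ`, where `u` is the Riccati supersolution
and `ψ` the Jacobi field. -/
def piconeFlux (w ψ ψ' u : ℝ → ℝ) (s x : ℝ) : ℝ :=
  u x * (w x + s * ψ x) ^ 2 - s * ψ' x * (2 * w x + s * ψ x)

/-- The density of the quadratic form `∫ (w'² - V w²)`, with the Lagrange multiplier `2 s` for the
constraint `∫ w Z = 0`. -/
noncomputable def multiplierDensity (V Z w : ℝ → ℝ) (s x : ℝ) : ℝ :=
  deriv w x ^ 2 - V x * w x ^ 2 - 2 * s * (w x * Z x)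

section Picone

variable {V n Z w ψ ψ' u : ℝ → ℝ} {s : ℝ}

theorem exists_hasDerivAt_piconeFlux_le {x u' : ℝ} (hJ : IsPositiveJacobiField n Z ψ ψ')
    (hw : Differentiable ℝ w) (hVn : V x ≤ n x) (hZ : 0 ≤ Z x) (hx : 0 < x)
    (hu : HasDerivAt u u' x) (hle : u' + u x ^ 2 + n x ≤ 0) :
    ∃ F', HasDerivAt (piconeFlux w ψ ψ' u s) F' x ∧ F' ≤ multiplierDensity V Z w s x := by
  have hψ := hJ.hasDerivAt x hx.le
  have hv := (hw x).hasDerivAt.add (hψ.const_mul s)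
  have h2v := ((hw x).hasDerivAt.const_mul 2).add (hψ.const_mul s)
  refine ⟨_, (hu.mul (hv.pow 2)).sub (((hJ.hasDerivAt' x hx.le).const_mul s).mul h2v), ?_⟩
  have hsquare := sq_nonneg (deriv w x + s * ψ' x - u x * (w x + s * ψ x))
  have hriccati := mul_nonneg (neg_nonneg.2 hle) (sq_nonneg (w x + s * ψ x))
  have hpotential := mul_nonneg (sub_nonneg.2 hVn) (sq_nonneg (w x))
  have hforcing := mul_nonneg (sq_nonneg s) (mul_nonneg hZ (hJ.pos x hx).le)
  simp only [multiplierDensity, Pi.add_apply, Pi.pow_apply, Nat.add_one_sub_one, Nat.cast_ofNat,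
    pow_one]
  linear_combination hsquare + hriccati + hpotential + hforcing

theorem piconeFlux_sub_le_integral {a b : ℝ} (ha : 0 ≤ a) (hab : a ≤ b)
    (hJ : IsPositiveJacobiField n Z ψ ψ') (hw : Differentiable ℝ w)
    (hVn : ∀ x, 0 < x → V x ≤ n x) (hZ : ∀ x, 0 < x → 0 ≤ Z x)
    (hu : IsRiccatiSupersolution n u (Icc a b))
    (hint : IntegrableOn (multiplierDensity V Z w s) (Ioi 0)) :
    piconeFlux w ψ ψ' u s b - piconeFlux w ψ ψ' u s a
      ≤ ∫ x in a..b, multiplierDensity V Z w s x := by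
  have hderiv : ∀ x ∈ Ioo a b, ∃ F', HasDerivAt (piconeFlux w ψ ψ' u s) F' x ∧
      F' ≤ multiplierDensity V Z w s x := fun x hx ↦ by
    have hx0 : 0 < x := ha.trans_lt hx.1
    obtain ⟨u', hu', hle⟩ := hu.exists_hasDerivAt x (by rwa [interior_Icc])
    exact exists_hasDerivAt_piconeFlux_le hJ hw (hVn x hx0) (hZ x hx0) hx0 hu' hle
  choose! F' hF' hF'_le using hderiv
  have hψ_cont : ContinuousOn ψ (Icc a b) := fun x hx ↦
    (hJ.hasDerivAt x (ha.trans hx.1)).continuousAt.continuousWithinAt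
  have hψ'_cont : ContinuousOn ψ' (Icc a b) := fun x hx ↦
    (hJ.hasDerivAt' x (ha.trans hx.1)).continuousAt.continuousWithinAt
  have hu_cont := hu.continuousOn
  have hw_cont : ContinuousOn w (Icc a b) := hw.continuous.continuousOn
  refine intervalIntegral.sub_le_integral_of_hasDeriv_right_of_le hab ?_
    (fun x hx ↦ (hF' x hx).hasDerivWithinAt) ?_ hF'_le
  · unfold piconeFlux
    fun_prop
  · exact ((integrableOn_Ici_iff_integrableOn_Ioi).2 hint).mono_set fun x hx ↦ ha.trans hx.1

theorem tendsto_piconeFlux_zero (hψ' : Tendsto ψ' atTop (𝓝 0)) {c : ℝ}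
    (hψ : Tendsto ψ atTop (𝓝 c)) (hw : Tendsto (fun x ↦ ψ' x * w x) atTop (𝓝 0)) :
    Tendsto (piconeFlux w ψ ψ' 0 s) atTop (𝓝 0) := by
  have h := (hw.const_mul (-2 * s)).sub ((hψ'.mul hψ).const_mul (s ^ 2))
  simp only [zero_mul, mul_zero, sub_zero] at h
  refine h.congr fun x ↦ ?_
  simp only [piconeFlux, Pi.zero_apply]
  ring

theorem integral_multiplierDensity_nonneg {uL uR : ℝ → ℝ} {R c : ℝ} (hR : 0 < R)
    (hJ : IsPositiveJacobiField n Z ψ ψ') (hψ : Tendsto ψ atTop (𝓝 c))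
    (hψ' : Tendsto ψ' atTop (𝓝 0))
    (hVn : ∀ x, 0 < x → V x ≤ n x) (hZ : ∀ x, 0 < x → 0 ≤ Z x)
    (huL : IsRiccatiSupersolution n uL (Icc 0 R)) (huR : IsRiccatiSupersolution n uR (Ici R))
    (huR_nonneg : ∀ x, R ≤ x → 0 ≤ uR x)
    (hw : Differentiable ℝ w) (hw0 : w 0 = 0) (hψ'w : Tendsto (fun x ↦ ψ' x * w x) atTop (𝓝 0))
    (hs : w R + s * ψ R = 0) (hint : IntegrableOn (multiplierDensity V Z w s) (Ioi 0)) :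
    0 ≤ ∫ x in Ioi 0, multiplierDensity V Z w s x := by
  refine le_of_tendsto_of_tendsto (tendsto_piconeFlux_zero (s := s) hψ' hψ hψ'w)
    (intervalIntegral_tendsto_integral_Ioi 0 hint tendsto_id) ?_
  filter_upwards [eventually_ge_atTop R] with T hT
  have hleft := piconeFlux_sub_le_integral le_rfl hR.le hJ hw hVn hZ huL hint
  have hright := piconeFlux_sub_le_integral hR.le hT hJ hw hVn hZ
    (huR.mono Icc_subset_Ici_self) hint
  have hflux_zero : piconeFlux w ψ ψ' uL s 0 = 0 := by simp [piconeFlux, hw0, hJ.zero]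
  have hflux_match : piconeFlux w ψ ψ' uL s R = piconeFlux w ψ ψ' uR s R := by
    simp only [piconeFlux, hs]
    ring
  have hflux_T : piconeFlux w ψ ψ' 0 s T ≤ piconeFlux w ψ ψ' uR s T := by
    have := mul_nonneg (huR_nonneg T hT) (sq_nonneg (w T + s * ψ T))
    simp only [piconeFlux, Pi.zero_apply]
    linarith
  have hint' := (integrableOn_Ici_iff_integrableOn_Ioi).2 hint
  have hsplit := intervalIntegral.integral_add_adjacent_intervals
    ((intervalIntegrable_iff_integrableOn_Icc_of_le hR.le).2
      (hint'.mono_set fun x hx ↦ hx.1))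
    ((intervalIntegrable_iff_integrableOn_Icc_of_le hT).2
      (hint'.mono_set fun x hx ↦ hR.le.trans hx.1))
  simp only [id_eq]
  linarith

end Picone

theorem tendsto_exp_neg_mul_atTop {b : ℝ} (hb : 0 < b) :
    Tendsto (fun x ↦ Real.exp (-b * x)) atTop (𝓝 0) :=
  Real.tendsto_exp_atBot.comp (tendsto_id.const_mul_atTop_of_neg (neg_lt_zero.2 hb))

theorem isBigO_id_of_integrableOn_deriv_sq {w : ℝ → ℝ} (hw : Differentiable ℝ w)
    (hint : IntegrableOn (fun x ↦ deriv w x ^ 2) (Ioi 0)) : w =O[atTop] (id : ℝ → ℝ) := by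
  have hint' := (integrableOn_Ici_iff_integrableOn_Ioi).2 hint
  set E := ∫ x in Ioi 0, deriv w x ^ 2
  have one_sided : ∀ f : ℝ → ℝ, Differentiable ℝ f → (∀ x, deriv f x ^ 2 = deriv w x ^ 2) →
      ∀ x, 0 ≤ x → f x - f 0 ≤ x + E := fun f hf hsq x hx ↦ by
    have hint_x : IntegrableOn (fun y ↦ deriv w y ^ 2) (Icc 0 x) :=
      hint'.mono_set Icc_subset_Ici_self
    have hint_x' := (intervalIntegrable_iff_integrableOn_Icc_of_le hx).2 hint_x
    calc f x - f 0 ≤ ∫ y in (0)..x, (1 + deriv w y ^ 2) :=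
          intervalIntegral.sub_le_integral_of_hasDeriv_right_of_le hx hf.continuous.continuousOn
            (fun y _ ↦ (hf y).hasDerivAt.hasDerivWithinAt)
            ((integrableOn_const (by simp)).add hint_x)
            fun y _ ↦ by nlinarith [hsq y, sq_nonneg (deriv f y - 1)]
      _ = x + ∫ y in (0)..x, deriv w y ^ 2 := by
          rw [intervalIntegral.integral_add (by simp) hint_x']
          simp
      _ ≤ x + E := by
          rw [intervalIntegral.integral_of_le hx]
          gcongr
          exact setIntegral_mono_set hint (ae_of_all _ fun y ↦ sq_nonneg _)
            Ioc_subset_Ioi_self.eventuallyLE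
  refine IsBigO.of_bound (1 + E + |w 0|) ?_
  filter_upwards [eventually_ge_atTop 1] with x hx
  have hupper := one_sided w hw (fun _ ↦ rfl) x (by linarith)
  have hlower := one_sided (fun y ↦ -w y) hw.neg (fun y ↦ by simp [deriv.fun_neg]) x (by linarith)
  have hE : 0 ≤ E := setIntegral_nonneg measurableSet_Ioi fun y _ ↦ sq_nonneg _
  rw [Real.norm_eq_abs, Real.norm_eq_abs, id, abs_of_pos (by linarith : 0 < x), abs_le]
  constructor <;> nlinarith [neg_abs_le (w 0), le_abs_self (w 0), abs_nonneg (w 0)]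

theorem isBigO_mul_pow_exp {f w : ℝ → ℝ} {b : ℝ} (hb : 0 < b) (k : ℕ)
    (hf : f =O[atTop] fun x ↦ Real.exp (-b * x)) (hw : w =O[atTop] (id : ℝ → ℝ)) :
    (fun x ↦ f x * w x ^ k) =O[atTop] fun x ↦ Real.exp (-(b / 2) * x) := by
  have hpow := (hw.pow k).trans (isLittleO_pow_exp_pos_mul_atTop k (half_pos hb)).isBigO
  refine (hf.mul hpow).congr_right fun x ↦ ?_
  rw [← Real.exp_add]
  ring_nf

theorem integral_deriv_sq_sub_nonneg_Ioi {V n Z w ψ ψ' uL uR : ℝ → ℝ} {R b c : ℝ} (hR : 0 < R)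
    (hJ : IsPositiveJacobiField n Z ψ ψ') (hψ : Tendsto ψ atTop (𝓝 c))
    (hVn : ∀ x, 0 < x → V x ≤ n x) (hZ : ∀ x, 0 < x → 0 ≤ Z x)
    (huL : IsRiccatiSupersolution n uL (Icc 0 R)) (huR : IsRiccatiSupersolution n uR (Ici R))
    (huR_nonneg : ∀ x, R ≤ x → 0 ≤ uR x)
    (hb : 0 < b) (hψ'_decay : ψ' =O[atTop] fun x ↦ Real.exp (-b * x))
    (hV_cont : Continuous V) (hV_decay : V =O[atTop] fun x ↦ Real.exp (-b * x))
    (hZ_cont : Continuous Z) (hZ_decay : Z =O[atTop] fun x ↦ Real.exp (-b * x))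
    (hw : Differentiable ℝ w) (hw0 : w 0 = 0)
    (hint : IntegrableOn (fun x ↦ deriv w x ^ 2) (Ioi 0))
    (hortho : ∫ x in Ioi 0, w x * Z x = 0) :
    IntegrableOn (fun x ↦ V x * w x ^ 2) (Ioi 0) ∧
      0 ≤ ∫ x in Ioi 0, (deriv w x ^ 2 - V x * w x ^ 2) := by
  have hw_growth := isBigO_id_of_integrableOn_deriv_sq hw hint
  have hw_cont := hw.continuous
  have hVw : IntegrableOn (fun x ↦ V x * w x ^ 2) (Ioi 0) :=
    integrable_of_isBigO_exp_neg (half_pos hb) (by fun_prop)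
      (isBigO_mul_pow_exp hb 2 hV_decay hw_growth)
  have hZw : IntegrableOn (fun x ↦ w x * Z x) (Ioi 0) :=
    integrable_of_isBigO_exp_neg (half_pos hb) (by fun_prop)
      ((isBigO_mul_pow_exp hb 1 hZ_decay hw_growth).congr_left fun x ↦ by ring)
  have hψ'w : Tendsto (fun x ↦ ψ' x * w x) atTop (𝓝 0) :=
    ((isBigO_mul_pow_exp hb 1 hψ'_decay hw_growth).trans_tendsto
      (tendsto_exp_neg_mul_atTop (half_pos hb))).congr fun x ↦ by rw [pow_one]
  have hψR := (hJ.pos R hR).ne'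
  have hquad : IntegrableOn (fun x ↦ deriv w x ^ 2 - V x * w x ^ 2) (Ioi 0) := hint.sub hVw
  have hnonneg := integral_multiplierDensity_nonneg (s := -w R / ψ R) hR hJ hψ
    (hψ'_decay.trans_tendsto (tendsto_exp_neg_mul_atTop hb)) hVn hZ huL huR huR_nonneg hw hw0
    hψ'w (by field_simp; ring) (hquad.sub (hZw.const_mul _))
  refine ⟨hVw, hnonneg.trans_eq ?_⟩
  unfold multiplierDensity
  rw [integral_sub hquad (hZw.const_mul _), integral_const_mul, hortho, mul_zero, sub_zero]

/-- The rate of the variable `rho`; with it the hyperbolic functions in `Vpot` and `Z1` have the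
arguments `decayRate * x` and `8 * decayRate * x`. -/
noncomputable def decayRate : ℝ := 1 / (8 * √2)

theorem decayRate_pos : 0 < decayRate := by
  unfold decayRate
  positivity

theorem decayRate_sq : decayRate ^ 2 = 1 / 128 := by
  rw [decayRate, div_pow, mul_pow, Real.sq_sqrt zero_le_two]
  norm_num

/-- The variable `ρ = exp (-x / (8 √2))`, which maps `[0, ∞)` onto `(0, 1]` and in which `Vpot` and
`Z1` are rational functions, up to a constant factor. -/
noncomputable def rho (x : ℝ) : ℝ := Real.exp (-decayRate * x)

theorem rho_zero : rho 0 = 1 := by simp [rho]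

theorem rho_pos (x : ℝ) : 0 < rho x := Real.exp_pos _

theorem rho_strictAnti : StrictAnti rho := fun _ _ hxy ↦
  Real.exp_lt_exp.2 (mul_lt_mul_of_neg_left hxy (neg_lt_zero.2 decayRate_pos))

theorem rho_mem_Ioo {x : ℝ} (hx : 0 < x) : rho x ∈ Ioo 0 1 :=
  ⟨rho_pos x, rho_zero ▸ rho_strictAnti hx⟩

theorem tendsto_rho : Tendsto rho atTop (𝓝 0) :=
  tendsto_exp_neg_mul_atTop decayRate_pos

theorem exists_rho_eq {r : ℝ} (hr : r ∈ Ioo 0 1) : ∃ x, 0 < x ∧ rho x = r := by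
  refine ⟨-Real.log r / decayRate, div_pos (neg_pos.2 (Real.log_neg hr.1 hr.2)) decayRate_pos, ?_⟩
  rw [rho, ← Real.exp_log hr.1]
  congr 1
  field_simp [decayRate_pos.ne']
  simp

theorem isBigO_comp_rho {f : ℝ → ℝ} (hf : DifferentiableAt ℝ f 0) (hf0 : f 0 = 0) :
    (fun x ↦ f (rho x)) =O[atTop] fun x ↦ Real.exp (-decayRate * x) :=
  (hf.isBigO_sub.comp_tendsto tendsto_rho).congr (fun x ↦ by simp [hf0]) fun x ↦ by simp [rho]

/-- The Euler operator `p ↦ X p'`. Up to the factor `-decayRate` it is differentiation in `x` of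
polynomials in `rho x`. -/
noncomputable def eulerOp : ℝ[X] →ₗ[ℝ] ℝ[X] := LinearMap.mulLeft ℝ X ∘ₗ derivative

theorem eulerOp_C (a : ℝ) : eulerOp (C a) = 0 := by simp [eulerOp]

theorem eulerOp_C_mul_X_pow (a : ℝ) (k : ℕ) :
    eulerOp (C a * X ^ k) = C (k * a) * X ^ k := by
  rcases k with _ | k
  · simp [eulerOp]
  · simp only [eulerOp, LinearMap.comp_apply, LinearMap.mulLeft_apply, derivative_C_mul_X_pow,
      Nat.add_sub_cancel]
    rw [pow_succ, mul_comm a]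
    ring

theorem eval_eulerOp (p : ℝ[X]) (x : ℝ) : (eulerOp p).eval x = x * p.derivative.eval x := by
  simp [eulerOp]

theorem hasDerivAt_rho (x : ℝ) : HasDerivAt rho (-decayRate * rho x) x :=
  ((hasDerivAt_id x).const_mul (-decayRate)).exp.congr_deriv (by simp [rho, mul_comm])

theorem hasDerivAt_eval_rho (p : ℝ[X]) (x : ℝ) :
    HasDerivAt (fun x ↦ p.eval (rho x)) (-decayRate * (eulerOp p).eval (rho x)) x := by
  refine ((p.hasDerivAt (rho x)).comp x (hasDerivAt_rho x)).congr_deriv ?_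
  rw [eval_eulerOp]
  ring

theorem hasDerivAt_deriv_eval_rho (p : ℝ[X]) (x : ℝ) :
    HasDerivAt (fun x ↦ -decayRate * (eulerOp p).eval (rho x))
      ((eulerOp (eulerOp p)).eval (rho x) / 128) x := by
  refine ((hasDerivAt_eval_rho (eulerOp p) x).const_mul (-decayRate)).congr_deriv ?_
  linear_combination (eulerOp (eulerOp p)).eval (rho x) * decayRate_sq

theorem rho_pow (k : ℕ) (x : ℝ) : rho x ^ k = Real.exp (-(k * (decayRate * x))) := by
  rw [rho, ← Real.exp_nat_mul]
  ring_nf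

theorem cosh_mul_decayRate (k : ℕ) (x : ℝ) :
    Real.cosh (k * (decayRate * x)) = (1 + rho x ^ (2 * k)) / (2 * rho x ^ k) := by
  rw [Real.cosh_eq, mul_comm 2 k, pow_mul, rho_pow, Real.exp_neg]
  field_simp

theorem sinh_mul_decayRate (k : ℕ) (x : ℝ) :
    Real.sinh (k * (decayRate * x)) = (1 - rho x ^ (2 * k)) / (2 * rho x ^ k) := by
  rw [Real.sinh_eq, mul_comm 2 k, pow_mul, rho_pow, Real.exp_neg]
  field_simp

/-- The potential `Vpot` in the variable `rho`. -/
noncomputable def potentialRat (p : ℝ) : ℝ :=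
  p ^ 2 / (64 * (1 + p ^ 2) ^ 2)
    + 24 * p ^ 14 * (1 - p ^ 4) * (1 - p ^ 16) / (1 + p ^ 16) ^ 3

/-- The constraint function `Z1` in the variable `rho`, without its factor `2 ^ (-3 / 4) * √3`. -/
noncomputable def constraintRat (p : ℝ) : ℝ :=
  p ^ 7 * (1 + p ^ 2) * (1 - p ^ 16) / (1 + p ^ 16) ^ 2

theorem div_eq_decayRate_mul (x : ℝ) : x / (8 * √2) = (1 : ℕ) * (decayRate * x) := by
  rw [decayRate]
  push_cast
  ring

theorem div_sqrt_two_eq_decayRate_mul (x : ℝ) : x / √2 = (8 : ℕ) * (decayRate * x) := by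
  rw [decayRate]
  push_cast
  ring

theorem Vpot_eq_potentialRat_rho (x : ℝ) : Vpot x = potentialRat (rho x) := by
  have := rho_pos x
  simp only [Vpot, sech, Real.tanh_eq_sinh_div_cosh, div_eq_decayRate_mul,
    div_sqrt_two_eq_decayRate_mul, cosh_mul_decayRate, sinh_mul_decayRate, potentialRat]
  field_simp
  ring

theorem Z1_eq_constraintRat_rho (x : ℝ) :
    Z1 x = (2 : ℝ) ^ (-(3 : ℝ) / 4) * √3 * constraintRat (rho x) := by
  have := rho_pos x
  simp only [Z1, sech, Real.tanh_eq_sinh_div_cosh, div_eq_decayRate_mul,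
    div_sqrt_two_eq_decayRate_mul, cosh_mul_decayRate, sinh_mul_decayRate, constraintRat]
  field_simp

theorem differentiable_potentialRat : Differentiable ℝ potentialRat := by
  intro p
  unfold potentialRat
  fun_prop (disch := positivity)

theorem differentiable_constraintRat : Differentiable ℝ constraintRat := by
  intro p
  unfold constraintRat
  fun_prop (disch := positivity)

theorem constraintRat_nonneg {p : ℝ} (hp : p ∈ Icc 0 1) : 0 ≤ constraintRat p := by
  have hp0 := hp.1
  have : 0 ≤ 1 - p ^ 16 := sub_nonneg.2 (pow_le_one₀ hp.1 hp.2)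
  unfold constraintRat
  positivity

theorem even_Vpot : Vpot.Even := fun x ↦ by
  simp [Vpot, sech, neg_div, Real.tanh_neg, Real.cosh_neg]

theorem odd_Z1 : Z1.Odd := fun x ↦ by
  simp [Z1, sech, neg_div, Real.tanh_neg, Real.cosh_neg]

-- Substituting `p = (a + b y) / (1 + y)` with `y ≥ 0` proves a rational inequality in `p ∈ [a, b)`
-- as soon as all the coefficients become nonnegative; the intervals below are cut to that end.
theorem exists_nonneg_moebius {a b p : ℝ} (hp : p ∈ Ico a b) :
    ∃ y, 0 ≤ y ∧ (a + b * y) / (1 + y) = p := by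
  have hb : 0 < b - p := sub_pos.2 hp.2
  have ha : 0 ≤ p - a := sub_nonneg.2 hp.1
  refine ⟨(p - a) / (b - p), by positivity, ?_⟩
  field_simp
  ring

/-- The Jacobi field in the variable `rho`. Like those of `phiLeft` and `phiRight`, its
coefficients were found numerically, with enough slack to be rounded to integers. -/
noncomputable def psiPoly : ℝ[X] :=
  C 3 - C 2 * X ^ 2 + C 63 * X ^ 8 - C 118 * X ^ 10 + C 54 * X ^ 12

/-- The positive function whose logarithmic derivative is the Riccati supersolution near `x = 0`,
in the variable `rho`. -/
noncomputable def phiLeft : ℝ[X] := C 98 * X ^ 18 - C 280 * X ^ 12 + C 227 * X ^ 6 - C 44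

/-- The positive function whose logarithmic derivative is the Riccati supersolution near
`x = ∞`, in the variable `rho`. -/
noncomputable def phiRight : ℝ[X] := C 8 - C 6 * X ^ 2 - C 21 * X ^ 8

theorem eval_psiPoly (p : ℝ) :
    psiPoly.eval p = 3 - 2 * p ^ 2 + 63 * p ^ 8 - 118 * p ^ 10 + 54 * p ^ 12 := by
  simp [psiPoly]

theorem eval_phiLeft (p : ℝ) :
    phiLeft.eval p = 98 * p ^ 18 - 280 * p ^ 12 + 227 * p ^ 6 - 44 := by
  simp [phiLeft]

theorem eval_phiRight (p : ℝ) : phiRight.eval p = 8 - 6 * p ^ 2 - 21 * p ^ 8 := by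
  simp [phiRight]

theorem eval_eulerOp_eulerOp_psiPoly (p : ℝ) : (eulerOp (eulerOp psiPoly)).eval p =
    -8 * p ^ 2 + 4032 * p ^ 8 - 11800 * p ^ 10 + 7776 * p ^ 12 := by
  simp only [psiPoly, map_add, map_sub, map_zero, eulerOp_C, eulerOp_C_mul_X_pow, eval_add,
    eval_sub, eval_zero, eval_mul, eval_C, eval_pow, eval_X]
  ring

theorem eval_eulerOp_eulerOp_phiLeft (p : ℝ) : (eulerOp (eulerOp phiLeft)).eval p =
    31752 * p ^ 18 - 40320 * p ^ 12 + 8172 * p ^ 6 := by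
  simp only [phiLeft, map_add, map_sub, map_zero, eulerOp_C, eulerOp_C_mul_X_pow, eval_add,
    eval_sub, eval_zero, eval_mul, eval_C, eval_pow, eval_X]
  ring

theorem eval_eulerOp_eulerOp_phiRight (p : ℝ) : (eulerOp (eulerOp phiRight)).eval p =
    -24 * p ^ 2 - 1344 * p ^ 8 := by
  simp only [phiRight, map_sub, map_zero, eulerOp_C, eulerOp_C_mul_X_pow, eval_sub, eval_zero,
    eval_mul, eval_C, eval_pow, eval_X]
  ring

theorem eval_psiPoly_pos {p : ℝ} (hp : p ∈ Ico 0 1) : 0 < psiPoly.eval p := by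
  obtain ⟨y, hy, rfl⟩ := exists_nonneg_moebius hp
  rw [eval_psiPoly]
  field_simp
  ring_nf
  positivity

theorem eval_phiLeft_pos {p : ℝ} (hp : p ∈ Icc (43 / 53) 1) : 0 < phiLeft.eval p := by
  rw [eval_phiLeft]
  rcases hp.2.eq_or_lt with rfl | hp1
  · norm_num
  · obtain ⟨y, hy, rfl⟩ := exists_nonneg_moebius ⟨hp.1, hp1⟩
    field_simp
    ring_nf
    positivity

theorem eval_phiRight_pos {p : ℝ} (hp : p ∈ Icc 0 (43 / 53)) : 0 < phiRight.eval p := by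
  have h2 := pow_le_pow_left₀ hp.1 hp.2 2
  have h8 := pow_le_pow_left₀ hp.1 hp.2 8
  rw [eval_phiRight]
  norm_num at h2 h8
  linarith

theorem eval_eulerOp_phiRight_nonpos (p : ℝ) : (eulerOp phiRight).eval p ≤ 0 := by
  have h : (eulerOp phiRight).eval p = -(12 * p ^ 2 + 168 * p ^ 8) := by
    simp only [phiRight, map_sub, eulerOp_C, eulerOp_C_mul_X_pow, eval_sub, eval_zero, eval_mul,
      eval_C, eval_pow, eval_X]
    ring
  rw [h, neg_nonpos]
  positivity

/-- The potential, in the variable `rho`, for which `psiPoly` solves the Jacobi equation with right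
hand side `9 / 2 * constraintRat`; at `1`, where `psiPoly` vanishes, its value is junk. -/
noncomputable def jacobiPotential (p : ℝ) : ℝ :=
  (9 / 2 * constraintRat p - (eulerOp (eulerOp psiPoly)).eval p / 128) / psiPoly.eval p

theorem potentialRat_le_jacobiPotential {p : ℝ} (hp : p ∈ Ico 0 1) :
    201 / 200 * potentialRat p ≤ jacobiPotential p := by
  rw [jacobiPotential, le_div_iff₀ (eval_psiPoly_pos hp), ← sub_nonneg,
    eval_eulerOp_eulerOp_psiPoly, eval_psiPoly, constraintRat, potentialRat]
  have hcover : p ∈ Ico 0 (3 / 7) ∨ p ∈ Ico (3 / 7) (43 / 53) ∨ p ∈ Ico (43 / 53) 1 := by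
    grind
  rcases hcover with h | h | h <;> obtain ⟨y, hy, rfl⟩ := exists_nonneg_moebius h
  all_goals
    field_simp
    ring_nf
    positivity

theorem add_jacobiPotential_mul_nonpos {p a f : ℝ} (hp : p ∈ Ico 0 1)
    (h : a * psiPoly.eval p
      + (9 / 2 * constraintRat p - (eulerOp (eulerOp psiPoly)).eval p / 128) * f ≤ 0) :
    a + jacobiPotential p * f ≤ 0 := by
  have hψ := eval_psiPoly_pos hp
  refine (div_nonpos_of_nonpos_of_nonneg h hψ.le).trans_eq' ?_
  rw [jacobiPotential]
  field_simp

theorem phiLeft_supersolution {p : ℝ} (hp : p ∈ Ico (43 / 53) 1) :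
    (eulerOp (eulerOp phiLeft)).eval p / 128 + jacobiPotential p * phiLeft.eval p ≤ 0 := by
  apply add_jacobiPotential_mul_nonpos ⟨by linarith [hp.1], hp.2⟩
  rw [← neg_nonneg, eval_eulerOp_eulerOp_phiLeft, eval_phiLeft, eval_eulerOp_eulerOp_psiPoly,
    eval_psiPoly, constraintRat]
  obtain ⟨y, hy, rfl⟩ := exists_nonneg_moebius hp
  field_simp
  ring_nf
  positivity

theorem phiRight_supersolution {p : ℝ} (hp : p ∈ Ico 0 (43 / 53)) :
    (eulerOp (eulerOp phiRight)).eval p / 128 + jacobiPotential p * phiRight.eval p ≤ 0 := by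
  apply add_jacobiPotential_mul_nonpos ⟨hp.1, by linarith [hp.2]⟩
  rw [← neg_nonneg, eval_eulerOp_eulerOp_phiRight, eval_phiRight, eval_eulerOp_eulerOp_psiPoly,
    eval_psiPoly, constraintRat]
  have hcover : p ∈ Ico 0 (3 / 7) ∨ p ∈ Ico (3 / 7) (43 / 53) := by
    grind
  rcases hcover with h | h <;> obtain ⟨y, hy, rfl⟩ := exists_nonneg_moebius h
  all_goals
    field_simp
    ring_nf
    positivity

theorem isPositiveJacobiField_psiPoly :
    IsPositiveJacobiField (fun x ↦ jacobiPotential (rho x)) (fun x ↦ 9 / 2 * constraintRat (rho x))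
      (fun x ↦ psiPoly.eval (rho x)) (fun x ↦ -decayRate * (eulerOp psiPoly).eval (rho x)) where
  hasDerivAt x _ := hasDerivAt_eval_rho psiPoly x
  hasDerivAt' x hx := (hasDerivAt_deriv_eval_rho psiPoly x).congr_deriv <| by
    rcases hx.eq_or_lt with rfl | hx
    · rw [rho_zero, eval_eulerOp_eulerOp_psiPoly, eval_psiPoly, constraintRat]
      norm_num
    · have hψ := (eval_psiPoly_pos (Ioo_subset_Ico_self (rho_mem_Ioo hx))).ne'
      rw [jacobiPotential]
      field_simp
      ring
  zero := by
    rw [rho_zero, eval_psiPoly]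
    norm_num
  pos x hx := eval_psiPoly_pos (Ioo_subset_Ico_self (rho_mem_Ioo hx))

theorem isRiccatiSupersolution_eval_rho {n : ℝ → ℝ} {s : Set ℝ} {q : ℝ[X]}
    (hpos : ∀ x ∈ s, 0 < q.eval (rho x))
    (hle : ∀ x ∈ interior s, (eulerOp (eulerOp q)).eval (rho x) / 128 + n x * q.eval (rho x) ≤ 0) :
    IsRiccatiSupersolution n
      (fun x ↦ -decayRate * (eulerOp q).eval (rho x) / q.eval (rho x)) s :=
  isRiccatiSupersolution_div (fun x _ ↦ hasDerivAt_eval_rho q x)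
    (fun x _ ↦ hasDerivAt_deriv_eval_rho q x) hpos hle

theorem isRiccatiSupersolution_phiLeft {R : ℝ} (hR : rho R = 43 / 53) :
    IsRiccatiSupersolution (fun x ↦ jacobiPotential (rho x))
      (fun x ↦ -decayRate * (eulerOp phiLeft).eval (rho x) / phiLeft.eval (rho x)) (Icc 0 R) := by
  refine isRiccatiSupersolution_eval_rho (fun x hx ↦ eval_phiLeft_pos ?_)
    fun x hx ↦ phiLeft_supersolution ?_
  · exact ⟨hR ▸ rho_strictAnti.antitone hx.2, rho_zero ▸ rho_strictAnti.antitone hx.1⟩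
  · rw [interior_Icc] at hx
    exact ⟨hR ▸ rho_strictAnti.antitone hx.2.le, rho_zero ▸ rho_strictAnti hx.1⟩

theorem isRiccatiSupersolution_phiRight {R : ℝ} (hR : rho R = 43 / 53) :
    IsRiccatiSupersolution (fun x ↦ jacobiPotential (rho x))
      (fun x ↦ -decayRate * (eulerOp phiRight).eval (rho x) / phiRight.eval (rho x)) (Ici R) := by
  refine isRiccatiSupersolution_eval_rho (fun x hx ↦ eval_phiRight_pos ?_)
    fun x hx ↦ phiRight_supersolution ?_
  · exact ⟨(rho_pos x).le, hR ▸ rho_strictAnti.antitone hx⟩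
  · rw [interior_Ici] at hx
    exact ⟨(rho_pos x).le, hR ▸ rho_strictAnti hx⟩

theorem integral_deriv_sq_sub_Vpot_nonneg_Ioi {w : ℝ → ℝ} (hw : Differentiable ℝ w)
    (hw0 : w 0 = 0) (hint : IntegrableOn (fun x ↦ deriv w x ^ 2) (Ioi 0))
    (hortho : ∫ x in Ioi 0, w x * constraintRat (rho x) = 0) :
    IntegrableOn (fun x ↦ 201 / 200 * Vpot x * w x ^ 2) (Ioi 0) ∧
      0 ≤ ∫ x in Ioi 0, (deriv w x ^ 2 - 201 / 200 * Vpot x * w x ^ 2) := by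
  obtain ⟨R, hR, hρR⟩ := exists_rho_eq (r := 43 / 53) (by constructor <;> norm_num)
  have hρ : Continuous rho := continuous_iff_continuousAt.2 fun x ↦ (hasDerivAt_rho x).continuousAt
  have hV := differentiable_potentialRat.const_mul (201 / 200)
  have hZ := differentiable_constraintRat.const_mul (9 / 2)
  have hψ' : Differentiable ℝ fun p ↦ -decayRate * (eulerOp psiPoly).eval p := by fun_prop
  simp only [Vpot_eq_potentialRat_rho]
  refine integral_deriv_sq_sub_nonneg_Ioi hR isPositiveJacobiField_psiPoly
    ((psiPoly.continuous.tendsto 0).comp tendsto_rho)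
    (fun x hx ↦ potentialRat_le_jacobiPotential (Ioo_subset_Ico_self (rho_mem_Ioo hx)))
    (fun x hx ↦ mul_nonneg (by norm_num)
      (constraintRat_nonneg (Ioo_subset_Icc_self (rho_mem_Ioo hx))))
    (isRiccatiSupersolution_phiLeft hρR) (isRiccatiSupersolution_phiRight hρR)
    (fun x hx ↦ ?_) decayRate_pos
    (isBigO_comp_rho (hψ' 0) (by simp [eval_eulerOp]))
    (hV.continuous.comp hρ) (isBigO_comp_rho (hV 0) (by simp [potentialRat]))
    (hZ.continuous.comp hρ) (isBigO_comp_rho (hZ 0) (by simp [constraintRat]))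
    hw hw0 hint ?_
  · have hρx : rho x ≤ 43 / 53 := hρR ▸ rho_strictAnti.antitone hx
    refine div_nonneg (mul_nonneg_of_nonpos_of_nonpos (neg_nonpos.2 decayRate_pos.le) ?_)
      (eval_phiRight_pos ⟨(rho_pos x).le, hρx⟩).le
    exact eval_eulerOp_phiRight_nonpos (rho x)
  · simp_rw [mul_left_comm _ (9 / 2 : ℝ)]
    rw [integral_const_mul, hortho, mul_zero]

theorem integral_Ioi_mul_constraintRat_rho_eq_zero {w : ℝ → ℝ} (hodd : w.Odd)
    (hortho : ∫ x, w x * Z1 x = 0) : ∫ x in Ioi 0, w x * constraintRat (rho x) = 0 := by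
  have heven : (fun x ↦ w x * Z1 x).Even := hodd.mul_odd odd_Z1
  have hcoeff : (2 : ℝ) ^ (-(3 : ℝ) / 4) * √3 ≠ 0 := by positivity
  rw [integral_eq_two_mul_integral_Ioi_of_even heven] at hortho
  simp only [Z1_eq_constraintRat_rho, mul_left_comm (w _), integral_const_mul] at hortho
  simpa [hcoeff] using hortho

theorem coercivity_Bsharp_bounded_functions_general :
    ∃ κ : ℝ, 0 < κ ∧ ∀ w : ℝ → ℝ, (∀ x, w (-x) = -w x) → Differentiable ℝ w →
      Integrable (fun x ↦ deriv w x ^ 2) → (∫ x, w x * Z1 x) = 0 →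
      (∫ x, (deriv w x ^ 2 - Vpot x * w x ^ 2)) ≥ κ * ∫ x, deriv w x ^ 2 := by
  refine ⟨1 / 201, by norm_num, fun w hodd hw hint hortho ↦ ?_⟩
  have hw_odd : w.Odd := hodd
  have hderiv_even := even_deriv_of_odd hw_odd
  obtain ⟨hVw, hnonneg⟩ := integral_deriv_sq_sub_Vpot_nonneg_Ioi hw hw_odd.map_zero
    hint.integrableOn (integral_Ioi_mul_constraintRat_rho_eq_zero hodd hortho)
  simp only [mul_assoc] at hVw hnonneg
  have hVw' : IntegrableOn (fun x ↦ Vpot x * w x ^ 2) (Ioi 0) :=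
    (hVw.const_mul (200 / 201)).congr (ae_of_all _ fun x ↦ by ring)
  rw [integral_sub hint.integrableOn hVw, integral_const_mul] at hnonneg
  rw [integral_eq_two_mul_integral_Ioi_of_even fun x ↦ by rw [hderiv_even, even_Vpot, hodd, neg_sq],
    integral_eq_two_mul_integral_Ioi_of_even fun x ↦ by rw [hderiv_even],
    integral_sub hint.integrableOn hVw']
  linarith

theorem coercivity_Bsharp_bounded_functions :
    ∃ κ > 0, ∀ w : ℝ → ℝ,
      (∀ x : ℝ, w (-x) = -w x) →
      (∃ M : ℝ, ∀ x : ℝ, |w x| ≤ M) →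
      Differentiable ℝ w →
      Integrable (fun x => (deriv w x) ^ 2) →
      (∫ x : ℝ, w x * Z1 x) = 0 →
      (∫ x : ℝ, ((deriv w x) ^ 2 - Vpot x * (w x) ^ 2))
        ≥ κ * (∫ x : ℝ, (deriv w x) ^ 2) := by
  obtain ⟨κ, hκ, hcoercive⟩ := coercivity_Bsharp_bounded_functions_general
  exact ⟨κ, hκ, fun w hodd _ ↦ hcoercive w hodd⟩
end
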